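/- arXiv:1507.02547 — 9 statements merged into one kernel-verified Lean document; each statement's English description precedes it below -/
import Mathlib

section
/- (Pólya's theorem) Let f : ℝ → ℝ be continuous with f(0) = 1, f(−t) = f(t) for all t ∈ ℝ, f(t) → 0 as t → ∞, and f convex on [0, ∞). Then there exists a Borel probability measure μ on ℝ such that f(t) = ∫_ℝ e^{iλt} dμ(λ) for all t ∈ ℝ; in particular, f is positive definite on ℝ. -/
open MeasureTheory Complex Filter

noncomputable section

/-- `F` is positive definite on all of `ℝ`. -/
def PosDefOnReal (F : ℝ → ℂ) : Prop :=
  ∀ (N : ℕ) (x : Fin N → ℝ) (c : Fin N → ℂ),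
    (∑ i, ∑ j, (starRingEnd ℂ) (c i) * c j * F (x i - x j)).im = 0 ∧
    0 ≤ (∑ i, ∑ j, (starRingEnd ℂ) (c i) * c j * F (x i - x j)).re

/-!
The Fourier transform of the tent `max 0 (r - |t|)` is the Fejér kernel, a nonnegative integrable
function, so by Fourier inversion each tent is the characteristic function of a finite measure. For
a nonnegative, nonincreasing, convex sequence, the polygonal interpolant that is eventually
constant is a constant plus a combination of tents whose weights are the second differences of the
sequence, hence nonnegative; so it is a characteristic function too. A convex `f` on the half-line
with a finite limit is nonincreasing, and monotonicity squeezes the interpolants of its samples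
at spacing `1 / n` to `f`. Lévy's continuity theorem, via tightness, passes to the limit.
-/

open scoped FourierTransform RealInnerProductSpace Topology

section IsCharFun

variable {E : Type*} [NormedAddCommGroup E] [InnerProductSpace ℝ E] [MeasurableSpace E]

/-- `φ` is the characteristic function of a finite measure. Unlike the characteristic functions of
probability measures, these functions form a cone. -/
def IsCharFun (φ : E → ℂ) : Prop :=
  ∃ μ : Measure E, IsFiniteMeasure μ ∧ charFun μ = φ

lemma IsCharFun.zero : IsCharFun (0 : E → ℂ) :=
  ⟨0, inferInstance, funext fun _ => charFun_zero_measure⟩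

lemma IsCharFun.exists_probabilityMeasure {φ : E → ℂ} (hφ : IsCharFun φ) (h1 : φ 0 = 1) :
    ∃ μ : ProbabilityMeasure E, charFun μ = φ := by
  obtain ⟨μ, -, rfl⟩ := hφ
  rw [charFun_zero] at h1
  have hμ : μ.real Set.univ = 1 := by exact_mod_cast h1
  rw [measureReal_def, ENNReal.toReal_eq_one_iff] at hμ
  exact ⟨⟨μ, ⟨hμ⟩⟩, rfl⟩

lemma IsCharFun.const_mul {φ : E → ℂ} (hφ : IsCharFun φ) {c : ℝ} (hc : 0 ≤ c) :
    IsCharFun (fun t => c * φ t) := by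
  obtain ⟨μ, _, rfl⟩ := hφ
  refine ⟨c.toNNReal • μ, inferInstance, funext fun t => ?_⟩
  simp [charFun_apply, integral_smul_nnreal_measure, NNReal.smul_def, hc]

variable [BorelSpace E]

lemma IsCharFun.add {φ ψ : E → ℂ} (hφ : IsCharFun φ) (hψ : IsCharFun ψ) : IsCharFun (φ + ψ) := by
  obtain ⟨μ, _, rfl⟩ := hφ
  obtain ⟨ν, _, rfl⟩ := hψ
  refine ⟨μ + ν, inferInstance, funext fun t => ?_⟩
  simp only [Pi.add_apply, charFun_eq_integral_innerProbChar]
  exact integral_add_measure (BoundedContinuousFunction.integrable μ _)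
    (BoundedContinuousFunction.integrable ν _)

lemma IsCharFun.sum {ι : Type*} {s : Finset ι} {φ : ι → E → ℂ} (hφ : ∀ i ∈ s, IsCharFun (φ i)) :
    IsCharFun (∑ i ∈ s, φ i) :=
  Finset.sum_induction φ IsCharFun (fun _ _ => IsCharFun.add) IsCharFun.zero hφ

lemma IsCharFun.const {c : ℝ} (hc : 0 ≤ c) : IsCharFun (fun _ : E => (c : ℂ)) := by
  have one : IsCharFun (fun _ : E => (1 : ℂ)) :=
    ⟨Measure.dirac 0, inferInstance, funext fun t => by simp [charFun_dirac]⟩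
  simpa using one.const_mul hc

lemma IsCharFun.comp_smul {φ : E → ℂ} (hφ : IsCharFun φ) (r : ℝ) :
    IsCharFun (fun t => φ (r • t)) := by
  obtain ⟨μ, _, rfl⟩ := hφ
  exact ⟨μ.map (r • ·), inferInstance, funext fun t => charFun_map_smul r t⟩

variable [FiniteDimensional ℝ E]

lemma IsCharFun.of_tendsto {φ : ℕ → E → ℂ} {ψ : E → ℂ} (hφ : ∀ n, IsCharFun (φ n))
    (h1 : ∀ n, φ n 0 = 1) (hψ : ContinuousAt ψ 0)
    (hlim : ∀ t, Tendsto (fun n => φ n t) atTop (𝓝 (ψ t))) : IsCharFun ψ := by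
  choose μ hμ using fun n => (hφ n).exists_probabilityMeasure (h1 n)
  simp only [← hμ] at hlim
  have tight : IsTightMeasureSet {(m : Measure E) | m ∈ Set.range μ} := by
    simpa [Set.range] using isTightMeasureSet_of_tendsto_charFun hψ hlim
  obtain ⟨ν, -, n, hn, hν⟩ := (isCompact_closure_of_isTightMeasureSet tight).tendsto_subseq
    fun k => subset_closure (Set.mem_range_self k)
  exact ⟨ν, inferInstance, funext fun t => tendsto_nhds_unique
    (ProbabilityMeasure.tendsto_iff_tendsto_charFun.mp hν t) ((hlim t).comp hn.tendsto_atTop)⟩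

/-- The measure with density `g` has characteristic function `t ↦ φ (t / 2π)`. -/
lemma isCharFun_of_fourier_eq_nonneg {φ : E → ℂ} (hφ : Continuous φ) (hφ_int : Integrable φ)
    {g : E → ℝ} (hg : 0 ≤ g) (hg_int : Integrable g) (hφg : 𝓕 φ = fun w => (g w : ℂ)) :
    IsCharFun φ := by
  have inversion : 𝓕⁻ (fun w => (g w : ℂ)) = φ := by
    rw [← hφg]
    exact hφ.fourierInv_fourier_eq hφ_int (hφg ▸ hg_int.ofReal)
  have density : IsCharFun (fun t => φ ((2 * Real.pi)⁻¹ • t)) := by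
    refine ⟨volume.withDensity fun w => ENNReal.ofReal (g w),
      isFiniteMeasure_withDensity_ofReal hg_int.2, funext fun t => ?_⟩
    rw [← inversion, charFun_apply, Real.fourierInv_eq',
      integral_withDensity_eq_integral_toReal_smul₀ hg_int.aemeasurable.ennreal_ofReal (by simp)]
    refine integral_congr_ae (ae_of_all _ fun w => ?_)
    simp only [ENNReal.toReal_ofReal (hg w), inner_smul_right, real_smul, smul_eq_mul,
      mul_inv_cancel_left₀ Real.two_pi_pos.ne']
    exact mul_comm _ _
  simpa only [inv_smul_smul₀ Real.two_pi_pos.ne'] using density.comp_smul (2 * Real.pi)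

end IsCharFun

lemma IsCharFun.posDefOnReal {φ : ℝ → ℂ} (hφ : IsCharFun φ) : PosDefOnReal φ := by
  obtain ⟨μ, _, rfl⟩ := hφ
  intro N x c
  have integrable_exp (t : ℝ) : Integrable (fun l : ℝ => cexp (t * l * I)) μ :=
    Integrable.of_bound (by fun_prop) 1 (ae_of_all _ fun l => by
      rw [← ofReal_mul, norm_exp_ofReal_mul_I])
  have normSq_sum (l : ℝ) :
      ∑ i, ∑ j, starRingEnd ℂ (c i) * c j * cexp ((x i - x j : ℝ) * l * I) =
        (‖∑ j, c j * cexp (-(x j * l * I))‖ ^ 2 : ℝ) := by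
    push_cast
    rw [← conj_mul', map_sum, Finset.sum_mul_sum]
    refine Finset.sum_congr rfl fun i _ => Finset.sum_congr rfl fun j _ => ?_
    rw [map_mul, ← exp_conj, mul_mul_mul_comm, ← exp_add]
    simp only [map_neg, map_mul, conj_I, conj_ofReal]
    ring_nf
  have sum_eq_integral : ∑ i, ∑ j, starRingEnd ℂ (c i) * c j * charFun μ (x i - x j) =
      (∫ l, ‖∑ j, c j * cexp (-(x j * l * I))‖ ^ 2 ∂μ : ℝ) := by
    simp_rw [← integral_complex_ofReal, ← normSq_sum, charFun_apply_real]
    rw [integral_finsetSum _ fun i _ => integrable_finsetSum _ fun j _ =>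
      (integrable_exp _).const_mul _]
    refine Finset.sum_congr rfl fun i _ => ?_
    rw [integral_finsetSum _ fun j _ => (integrable_exp _).const_mul _]
    simp_rw [integral_const_mul]
  rw [sum_eq_integral]
  exact ⟨ofReal_im _, integral_nonneg fun l => sq_nonneg _⟩

section Tent

/-- The tent of height and half-width `r` centred at `0`, whose Fourier transform is the Fejér
kernel. It vanishes identically for `r ≤ 0`. -/
def tent (r t : ℝ) : ℝ := max 0 (r - |t|)

@[fun_prop]
lemma continuous_tent (r : ℝ) : Continuous (tent r) := by
  unfold tent
  fun_prop

lemma tent_eq_zero {r t : ℝ} (h : r ≤ |t|) : tent r t = 0 := max_eq_left (sub_nonpos.mpr h)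

lemma tent_of_abs_le {r t : ℝ} (h : |t| ≤ r) : tent r t = r - |t| :=
  max_eq_right (sub_nonneg.mpr h)

lemma tent_abs (r t : ℝ) : tent r |t| = tent r t := by simp only [tent, abs_abs]

lemma antitoneOn_tent (r : ℝ) : AntitoneOn (tent r) (Set.Ici 0) := fun _ hs _ _ hst =>
  max_le_max_left 0 <| sub_le_sub_left (abs_le_abs_of_nonneg hs hst) r

lemma hasCompactSupport_tent (r : ℝ) : HasCompactSupport (tent r) :=
  .intro (isCompact_closedBall 0 r) fun _ ht =>
    tent_eq_zero (not_le.mp (mt mem_closedBall_zero_iff.mpr ht)).le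

lemma integral_cos_mul_sub_eq_sinc_sq (a r : ℝ) :
    ∫ v in (0)..r, Real.cos (a * v) * (r - v) = r ^ 2 / 2 * Real.sinc (a * r / 2) ^ 2 := by
  rcases eq_or_ne a 0 with rfl | ha
  · have area : ∫ v in (0)..r, (r - v) = r ^ 2 / 2 := by
      rw [intervalIntegral.integral_comp_sub_left (fun x => x) r, integral_id]
      ring
    simpa using area
  rcases eq_or_ne r 0 with rfl | hr
  · simp
  have antideriv (v : ℝ) : HasDerivAt (fun v => Real.sin (a * v) / a * (r - v)
      - Real.cos (a * v) / a ^ 2) (Real.cos (a * v) * (r - v)) v := by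
    have hlin : HasDerivAt (fun v => a * v) a v := by simpa using (hasDerivAt_id v).const_mul a
    refine (((hlin.sin.div_const a).mul ((hasDerivAt_id v).const_sub r)).sub
      (hlin.cos.div_const (a ^ 2))).congr_deriv ?_
    simp only [id]
    field_simp
    ring
  have half_angle : Real.cos (a * r) = 1 - 2 * Real.sin (a * r / 2) ^ 2 := by
    rw [← Real.cos_two_mul_eq_one_sub]
    ring_nf
  rw [intervalIntegral.integral_eq_sub_of_hasDerivAt (fun v _ => antideriv v)
    (Continuous.intervalIntegrable (by fun_prop) _ _), Real.sinc_of_ne_zero (by positivity)]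
  simp only [half_angle, sub_self, mul_zero, Real.cos_zero, Real.sin_zero, zero_div, zero_mul]
  field_simp
  ring

lemma fourier_ofReal_of_even {g : ℝ → ℝ} (hg : Integrable g) (heven : ∀ t, g (-t) = g t) (w : ℝ) :
    𝓕 (fun t => (g t : ℂ)) w = (∫ v, Real.cos (2 * Real.pi * w * v) * g v : ℝ) := by
  have cos_int : Integrable fun v => Real.cos (2 * Real.pi * w * v) * g v :=
    hg.bdd_mul (by fun_prop) (ae_of_all _ fun v => Real.abs_cos_le_one _)
  have sin_int : Integrable fun v => Real.sin (2 * Real.pi * w * v) * g v :=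
    hg.bdd_mul (by fun_prop) (ae_of_all _ fun v => Real.abs_sin_le_one _)
  have sin_integral : ∫ v, Real.sin (2 * Real.pi * w * v) * g v = 0 := by
    have odd := integral_neg_eq_self (fun v => Real.sin (2 * Real.pi * w * v) * g v) volume
    simp only [mul_neg, Real.sin_neg, neg_mul, heven, integral_neg] at odd
    linarith
  have euler (v : ℝ) : cexp ((-2 * Real.pi * v * w : ℝ) * I) • (g v : ℂ) =
      (Real.cos (2 * Real.pi * w * v) * g v : ℝ) -
        (Real.sin (2 * Real.pi * w * v) * g v : ℝ) * I := by
    rw [show -2 * Real.pi * v * w = -(2 * Real.pi * w * v) by ring, exp_mul_I, ← ofReal_cos,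
      ← ofReal_sin, Real.cos_neg, Real.sin_neg, smul_eq_mul]
    push_cast
    ring
  rw [Real.fourier_real_eq_integral_exp_smul]
  simp_rw [euler]
  have cos_int_ofReal : Integrable fun v => ((Real.cos (2 * Real.pi * w * v) * g v : ℝ) : ℂ) :=
    cos_int.ofReal
  have sin_int_ofReal : Integrable fun v => ((Real.sin (2 * Real.pi * w * v) * g v : ℝ) : ℂ) :=
    sin_int.ofReal
  rw [integral_sub cos_int_ofReal (sin_int_ofReal.mul_const I), integral_mul_const,
    integral_complex_ofReal, integral_complex_ofReal, sin_integral, ofReal_zero, zero_mul, sub_zero]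

lemma fourier_tent {r : ℝ} (hr : 0 ≤ r) :
    𝓕 (fun t => (tent r t : ℂ)) = fun w => (((r * Real.sinc (Real.pi * r * w)) ^ 2 : ℝ) : ℂ) := by
  ext w
  have tent_int : Integrable (tent r) :=
    (continuous_tent r).integrable_of_hasCompactSupport (hasCompactSupport_tent r)
  rw [fourier_ofReal_of_even tent_int fun t => by rw [← tent_abs, abs_neg, tent_abs]]
  congr 1
  calc ∫ v, Real.cos (2 * Real.pi * w * v) * tent r v
      = ∫ v, Real.cos (2 * Real.pi * w * |v|) * tent r |v| := by
        congr with v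
        rw [tent_abs, ← Real.cos_abs (_ * v), ← Real.cos_abs (_ * |v|), abs_mul, abs_mul _ |v|,
          abs_abs]
    _ = 2 * ∫ v in Set.Ioi 0, Real.cos (2 * Real.pi * w * v) * tent r v :=
        integral_comp_abs (f := fun v => Real.cos (2 * Real.pi * w * v) * tent r v)
    _ = 2 * ∫ v in (0)..r, Real.cos (2 * Real.pi * w * v) * tent r v := by
        rw [intervalIntegral.integral_of_le hr, setIntegral_eq_of_subset_of_forall_sdiff_eq_zero
          measurableSet_Ioi Set.Ioc_subset_Ioi_self fun v hv => ?_]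
        have hrv : r ≤ |v| := by grind
        rw [tent_eq_zero hrv, mul_zero]
    _ = 2 * ∫ v in (0)..r, Real.cos (2 * Real.pi * w * v) * (r - v) := by
        congr 1
        refine intervalIntegral.integral_congr fun v hv => ?_
        rw [Set.uIcc_of_le hr] at hv
        have hv_abs : |v| = v := abs_of_nonneg hv.1
        simp only [tent_of_abs_le (hv_abs.trans_le hv.2), hv_abs]
    _ = (r * Real.sinc (Real.pi * r * w)) ^ 2 := by
        rw [integral_cos_mul_sub_eq_sinc_sq]
        ring_nf

lemma integrable_sinc_sq : Integrable (fun x => Real.sinc x ^ 2) := by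
  refine (integrable_inv_one_add_sq.const_mul 2).mono'
    (Real.continuous_sinc.pow 2).aestronglyMeasurable (ae_of_all _ fun x => ?_)
  have sinc_sq_le : Real.sinc x ^ 2 ≤ 1 := (sq_le_one_iff_abs_le_one _).mpr (Real.abs_sinc_le_one x)
  have mul_sinc : x * Real.sinc x = Real.sin x := by
    rcases eq_or_ne x 0 with rfl | hx
    · simp
    · rw [Real.sinc_of_ne_zero hx, mul_div_cancel₀ _ hx]
  have mul_sinc_sq_le : (x * Real.sinc x) ^ 2 ≤ 1 := mul_sinc ▸ Real.sin_sq_le_one x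
  rw [Real.norm_of_nonneg (sq_nonneg _), ← div_eq_mul_inv, le_div_iff₀ (by positivity)]
  linarith

lemma isCharFun_tent (r : ℝ) : IsCharFun (fun t => (tent r t : ℂ)) := by
  rcases le_or_gt r 0 with hr | hr
  · simpa [tent_eq_zero (hr.trans (abs_nonneg _))] using IsCharFun.const (E := ℝ) le_rfl
  · have fejer_int : Integrable (fun w => (r * Real.sinc (Real.pi * r * w)) ^ 2) := by
      simp_rw [mul_pow r]
      exact (integrable_sinc_sq.comp_mul_left' (by positivity)).const_mul _
    exact isCharFun_of_fourier_eq_nonneg (by fun_prop)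
      ((continuous_tent r).integrable_of_hasCompactSupport (hasCompactSupport_tent r)).ofReal
      (fun w => sq_nonneg _) fejer_int (fourier_tent hr.le)

end Tent

section PolygonalInterpolant

/-- The even function equal to `a k` at the nodes `±k` for `k ≤ M`, linear between consecutive nodes
and constant beyond `±M`, written as a combination of tents: the weight of each tent is the change
of slope at its foot. -/
def polygonalInterpolant (a : ℕ → ℝ) (M : ℕ) (t : ℝ) : ℝ :=
  a M + ∑ k ∈ Finset.range M, (a k - 2 * a (k + 1) + a (k + 2)) * tent (k + 1) t
    + (a M - a (M + 1)) * tent M t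

variable {a : ℕ → ℝ} {M : ℕ}

lemma polygonalInterpolant_abs (t : ℝ) :
    polygonalInterpolant a M |t| = polygonalInterpolant a M t := by
  simp only [polygonalInterpolant, tent_abs]

lemma tent_natCast {j k : ℕ} (h : j ≤ k) : tent k j = k - j := by
  rw [tent_of_abs_le (by simpa using h), Nat.abs_cast]

lemma polygonalInterpolant_natCast {j : ℕ} (hj : j ≤ M) : polygonalInterpolant a M j = a j := by
  induction M, hj using Nat.le_induction with
  | base =>
    have outside (k : ℕ) (hk : k ∈ Finset.range j) : tent (k + 1) (j : ℝ) = 0 :=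
      tent_eq_zero (by rw [Nat.abs_cast]; exact_mod_cast Finset.mem_range.mp hk)
    rw [polygonalInterpolant, Finset.sum_eq_zero fun k hk => by rw [outside k hk, mul_zero],
      tent_natCast le_rfl]
    ring
  | succ M hM ih =>
    have tent_succ : tent (M + 1) (j : ℝ) = M + 1 - j := by
      exact_mod_cast tent_natCast (hM.trans M.le_succ)
    rw [← ih, polygonalInterpolant, polygonalInterpolant, Finset.sum_range_succ, Nat.cast_succ,
      tent_succ, tent_natCast hM]
    ring

variable (ha : Antitone a) (hconv : ∀ k, 0 ≤ a k - 2 * a (k + 1) + a (k + 2))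
include ha hconv

lemma antitoneOn_polygonalInterpolant : AntitoneOn (polygonalInterpolant a M) (Set.Ici 0) := by
  intro s hs t ht hst
  have hM : 0 ≤ a M - a (M + 1) := sub_nonneg.mpr (ha M.le_succ)
  unfold polygonalInterpolant
  gcongr with k
  exacts [hconv k, antitoneOn_tent _ hs ht hst, antitoneOn_tent _ hs ht hst]

lemma le_polygonalInterpolant {t : ℝ} (ht : 0 ≤ t) (htM : t ≤ M) :
    a ⌈t⌉₊ ≤ polygonalInterpolant a M t := by
  rw [← polygonalInterpolant_natCast (a := a) (Nat.ceil_le.mpr htM)]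
  exact antitoneOn_polygonalInterpolant ha hconv ht (Set.mem_Ici.mpr (Nat.cast_nonneg _))
    (Nat.le_ceil t)

lemma polygonalInterpolant_le {t : ℝ} (ht : 0 ≤ t) (htM : t ≤ M) :
    polygonalInterpolant a M t ≤ a ⌊t⌋₊ := by
  rw [← polygonalInterpolant_natCast (a := a) (Nat.floor_le_of_le htM)]
  exact antitoneOn_polygonalInterpolant ha hconv (Set.mem_Ici.mpr (Nat.cast_nonneg _)) ht
    (Nat.floor_le ht)

lemma isCharFun_polygonalInterpolant (hM : 0 ≤ a M) :
    IsCharFun (fun t => (polygonalInterpolant a M t : ℂ)) := by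
  have tents := IsCharFun.sum (s := Finset.range M) fun k _ =>
    (isCharFun_tent (k + 1)).const_mul (hconv k)
  have last_tent := (isCharFun_tent M).const_mul (sub_nonneg.mpr (ha M.le_succ))
  convert ((IsCharFun.const hM).add tents).add last_tent using 1
  ext t
  simp [polygonalInterpolant]

end PolygonalInterpolant

lemma antitoneOn_Ici_of_convexOn {f : ℝ → ℝ} {a : ℝ} (hconv : ConvexOn ℝ (Set.Ici a) f)
    (hbdd : IsBoundedUnder (· ≤ ·) atTop f) : AntitoneOn f (Set.Ici a) := by
  intro x hx y hy hxy
  by_contra! hlt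
  have hxy' : x < y := hxy.lt_of_ne (by rintro rfl; exact hlt.false)
  set m := (f y - f x) / (y - x)
  have hm : 0 < m := div_pos (sub_pos.mpr hlt) (sub_pos.mpr hxy')
  have line_le : ∀ᶠ z in atTop, f y + m * (z - y) ≤ f z := by
    filter_upwards [eventually_gt_atTop y] with z hz
    have hslope := hconv.slope_mono_adjacent hx (Set.mem_Ici.mpr (hy.trans hz.le)) hxy' hz
    rw [le_div_iff₀ (sub_pos.mpr hz)] at hslope
    linarith
  have line_atTop : Tendsto (fun z => f y + m * (z - y)) atTop atTop :=
    tendsto_atTop_add_const_left _ _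
      ((tendsto_atTop_add_const_right _ (-y) tendsto_id).const_mul_atTop hm)
  exact not_isBoundedUnder_of_tendsto_atTop (tendsto_atTop_mono' _ line_le line_atTop) hbdd

section Sampling

variable {f : ℝ → ℝ} {N : ℝ}

lemma antitone_comp_natCast_div (hanti : AntitoneOn f (Set.Ici 0)) (hN : 0 ≤ N) :
    Antitone fun k : ℕ => f (k / N) := fun j k hjk =>
  hanti (Set.mem_Ici.mpr (by positivity)) (Set.mem_Ici.mpr (by positivity)) (by gcongr)

lemma second_difference_comp_natCast_div_nonneg (hconv : ConvexOn ℝ (Set.Ici 0) f) (hN : 0 ≤ N)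
    (k : ℕ) : 0 ≤ f (k / N) - 2 * f ((k + 1 : ℕ) / N) + f ((k + 2 : ℕ) / N) := by
  have midpoint : (1 / 2 : ℝ) • (k / N) + (1 / 2 : ℝ) • ((k + 2 : ℕ) / N) = (k + 1 : ℕ) / N := by
    simp only [smul_eq_mul]
    push_cast
    ring
  have hmid := hconv.2 (Set.mem_Ici.mpr (by positivity : 0 ≤ k / N))
    (Set.mem_Ici.mpr (by positivity : 0 ≤ (k + 2 : ℕ) / N)) one_half_pos.le one_half_pos.le
    (add_halves 1)
  rw [midpoint, smul_eq_mul, smul_eq_mul] at hmid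
  linarith

lemma tendsto_polygonalInterpolant_sampling (hconv : ConvexOn ℝ (Set.Ici 0) f)
    (hanti : AntitoneOn f (Set.Ici 0)) {t : ℝ} (ht : 0 ≤ t) (hcont : ContinuousAt f t) :
    Tendsto (fun n : ℕ => polygonalInterpolant (fun k => f (k / n)) (n ^ 2) (t * n)) atTop
      (𝓝 (f t)) := by
  have lower : Tendsto (fun n : ℕ => f (⌈t * n⌉₊ / n)) atTop (𝓝 (f t)) :=
    hcont.tendsto.comp ((tendsto_nat_ceil_mul_div_atTop ht).comp tendsto_natCast_atTop_atTop)
  have upper : Tendsto (fun n : ℕ => f (⌊t * n⌋₊ / n)) atTop (𝓝 (f t)) :=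
    hcont.tendsto.comp ((tendsto_nat_floor_mul_div_atTop ht).comp tendsto_natCast_atTop_atTop)
  have in_range : ∀ᶠ n : ℕ in atTop, t * n ≤ (n ^ 2 : ℕ) := by
    filter_upwards [eventually_ge_atTop ⌈t⌉₊] with n hn
    rw [Nat.cast_pow, sq]
    gcongr
    exact Nat.ceil_le.mp hn
  refine tendsto_of_tendsto_of_tendsto_of_le_of_le' lower upper ?_ ?_
  · filter_upwards [in_range] with n hn
    exact le_polygonalInterpolant (antitone_comp_natCast_div hanti n.cast_nonneg)
      (second_difference_comp_natCast_div_nonneg hconv n.cast_nonneg) (by positivity) hn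
  · filter_upwards [in_range] with n hn
    exact polygonalInterpolant_le (antitone_comp_natCast_div hanti n.cast_nonneg)
      (second_difference_comp_natCast_div_nonneg hconv n.cast_nonneg) (by positivity) hn

end Sampling

lemma isCharFun_of_convexOn_of_antitoneOn {f : ℝ → ℝ} (hcont : Continuous f) (h0 : f 0 = 1)
    (heven : ∀ t, f (-t) = f t) (hnonneg : ∀ t, 0 ≤ t → 0 ≤ f t)
    (hconv : ConvexOn ℝ (Set.Ici 0) f) (hanti : AntitoneOn f (Set.Ici 0)) :
    IsCharFun (fun t => (f t : ℂ)) := by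
  -- The samples at `k / n` for `k ≤ n ^ 2` fill `[0, n]`, which exhausts the half-line.
  let P (n : ℕ) : ℝ → ℝ := polygonalInterpolant (fun k => f (k / n)) (n ^ 2)
  have isCharFun_P (n : ℕ) : IsCharFun (fun t => (P n t : ℂ)) :=
    isCharFun_polygonalInterpolant (antitone_comp_natCast_div hanti n.cast_nonneg)
      (second_difference_comp_natCast_div_nonneg hconv n.cast_nonneg) (hnonneg _ (by positivity))
  have P_zero (n : ℕ) : P n 0 = 1 := by
    simpa [h0] using polygonalInterpolant_natCast (a := fun k => f (k / n)) (n ^ 2).zero_le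
  have P_tendsto (t : ℝ) : Tendsto (fun n : ℕ => P n (n * t)) atTop (𝓝 (f t)) := by
    have f_abs : f |t| = f t := by
      rcases abs_choice t with h | h <;> simp only [h, heven]
    have P_abs (n : ℕ) : P n (|t| * n) = P n (n * t) := by
      simp only [P]
      rw [← polygonalInterpolant_abs (n * t), abs_mul, Nat.abs_cast, mul_comm]
    simpa only [← f_abs, ← P_abs] using
      tendsto_polygonalInterpolant_sampling hconv hanti (abs_nonneg t) hcont.continuousAt
  exact IsCharFun.of_tendsto (fun n => (isCharFun_P n).comp_smul n) (fun n => by simp [P_zero])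
    (by fun_prop) fun t => (continuous_ofReal.tendsto _).comp (P_tendsto t)

theorem stmt_3_general (f : ℝ → ℝ) (hcont : Continuous f) (h0 : f 0 = 1)
    (heven : ∀ t : ℝ, f (-t) = f t) {c : ℝ} (hc : 0 ≤ c)
    (hlim : Tendsto f atTop (nhds c))
    (hconv : ConvexOn ℝ (Set.Ici (0 : ℝ)) f) :
    (∃ μ : Measure ℝ, IsProbabilityMeasure μ ∧
      ∀ t : ℝ, (f t : ℂ) = ∫ l, Complex.exp (Complex.I * (l : ℂ) * (t : ℂ)) ∂μ) ∧
    PosDefOnReal (fun t => (f t : ℂ)) := by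
  have hanti : AntitoneOn f (Set.Ici 0) := antitoneOn_Ici_of_convexOn hconv hlim.isBoundedUnder_le
  have hnonneg (t : ℝ) (ht : 0 ≤ t) : 0 ≤ f t :=
    hc.trans <| le_of_tendsto hlim <| (eventually_ge_atTop t).mono fun s hs =>
      hanti ht (ht.trans hs) hs
  have hf : IsCharFun (fun t => (f t : ℂ)) :=
    isCharFun_of_convexOn_of_antitoneOn hcont h0 heven hnonneg hconv hanti
  obtain ⟨μ, hμ⟩ := hf.exists_probabilityMeasure (by simp [h0])
  refine ⟨⟨μ, inferInstance, fun t => ?_⟩, hf.posDefOnReal⟩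
  rw [← congrFun hμ t, charFun_apply_real]
  simp only [mul_comm, mul_left_comm]

theorem stmt_3 (f : ℝ → ℝ) (hcont : Continuous f) (h0 : f 0 = 1)
    (heven : ∀ t : ℝ, f (-t) = f t)
    (hlim : Tendsto f atTop (nhds 0))
    (hconv : ConvexOn ℝ (Set.Ici (0 : ℝ)) f) :
    (∃ μ : Measure ℝ, IsProbabilityMeasure μ ∧
      ∀ t : ℝ, (f t : ℂ) = ∫ l, Complex.exp (Complex.I * (l : ℂ) * (t : ℂ)) ∂μ) ∧
    PosDefOnReal (fun t => (f t : ℂ)) :=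
  stmt_3_general f hcont h0 heven le_rfl hlim hconv
end
end

section
/- Let a > 0 and let F : ℝ → ℂ be real-analytic on some open neighborhood of 0. If μ and ν are finite positive Borel measures on ℝ such that ∫_ℝ e^{iλx} dμ(λ) = F(x) and ∫_ℝ e^{iλx} dν(λ) = F(x) for all x ∈ (−a, a), then μ = ν. (In the paper's terminology: if F, given and positive definite on (−a,a), is analytic in a neighborhood of 0, then Ext(F) is a singleton and Ext₂(F) is empty.) -/
open MeasureTheory Complex

noncomputable section

open Asymptotics Filter ProbabilityTheory Set
open scoped Nat Topology

/-!
A finite measure `μ` is determined by its characteristic function, so it suffices that analyticity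
of `charFun μ` at `0` propagates to the whole line; two such functions that agree near `0` then
agree everywhere. If `charFun μ` is of class `C²` at `0`, its second difference quotients at `0`
are bounded, and Fatou's lemma turns this into a finite second moment. The derivative of order `2n`
is, up to sign, the characteristic function of `x ^ (2n) dμ(x)`, so by induction all even moments
are finite. The Taylor series at `0` then bounds them by `C * (2n)! / r ^ (2n)`, whence
`∫ cosh (r x) dμ(x) < ∞`, and `charFun μ` extends holomorphically to a strip around the real axis.
-/

section Analysis

variable {E : Type*} [NormedAddCommGroup E]

lemma isBigO_second_difference [NormedSpace ℝ E] {f : ℝ → E} {x : ℝ} (hf : ContDiffAt ℝ 2 f x) :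
    (fun t ↦ f (x + t) + f (x - t) - (2 : ℝ) • f x) =O[𝓝 0] fun t ↦ t ^ 2 := by
  obtain ⟨u, hu, hfu⟩ := hf.contDiffOn le_rfl (by simp)
  obtain ⟨ε, hε, hball⟩ := Metric.mem_nhds_iff.1 (by simpa using hu)
  let T := taylorWithinEval f 2 (Metric.ball x ε) x
  let c := iteratedDerivWithin 2 f (Metric.ball x ε) x
  have hT : (fun y ↦ f y - T y) =O[𝓝 x] fun y ↦ (y - x) ^ 2 := by
    have := taylor_isLittleO (convex_ball x ε) (Metric.mem_ball_self hε) (hfu.mono hball)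
    rw [Metric.isOpen_ball.nhdsWithin_eq (Metric.mem_ball_self hε)] at this
    exact this.isBigO
  have hadd : (fun t ↦ f (x + t) - T (x + t)) =O[𝓝 0] fun t ↦ t ^ 2 := by
    simpa [Function.comp_def] using
      hT.comp_tendsto (Continuous.tendsto' (by fun_prop) 0 x (add_zero x) : Tendsto (x + ·) _ _)
  have hsub : (fun t ↦ f (x - t) - T (x - t)) =O[𝓝 0] fun t ↦ t ^ 2 := by
    simpa [Function.comp_def] using
      hT.comp_tendsto (Continuous.tendsto' (by fun_prop) 0 x (sub_zero x) : Tendsto (x - ·) _ _)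
  have hquad : (fun t : ℝ ↦ t ^ 2 • c) =O[𝓝 0] fun t ↦ t ^ 2 :=
    .of_bound ‖c‖ (.of_forall fun t ↦ by rw [norm_smul, mul_comm])
  have hTc (t : ℝ) : T (x + t) + T (x - t) = (2 : ℝ) • f x + t ^ 2 • c := by
    simp only [T, c, taylorWithinEval_succ, taylor_within_zero_eval]
    norm_num
    module
  refine ((hadd.add hsub).add hquad).congr_left fun t ↦ ?_
  rw [sub_add_sub_comm, hTc]
  module

lemma contDiffAt_iteratedDeriv {𝕜 : Type*} [NontriviallyNormedField 𝕜] [NormedSpace 𝕜 E]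
    {f : 𝕜 → E} {x : 𝕜} {m n : WithTop ℕ∞} {i : ℕ} (hf : ContDiffAt 𝕜 n f x) (hmn : m + i ≤ n) :
    ContDiffAt 𝕜 m (iteratedDeriv i f) x := by
  rw [iteratedDeriv_eq_equiv_comp]
  exact (LinearIsometryEquiv.contDiff _).contDiffAt.comp x (hf.iteratedFDeriv_right hmn)

lemma exists_summable_norm_iteratedDeriv {𝕜 : Type*} [RCLike 𝕜] [NormedSpace 𝕜 E]
    [CompleteSpace E] {f : 𝕜 → E} {x : 𝕜} (hf : AnalyticAt 𝕜 f x) :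
    ∃ r > 0, Summable fun n : ℕ ↦ ‖iteratedDeriv n f x‖ / n ! * r ^ n := by
  obtain ⟨p, R, hp⟩ := hf
  obtain ⟨r, hr, hrp⟩ := ENNReal.lt_iff_exists_nnreal_btwn.1 (hp.r_pos.trans_le hp.r_le)
  refine ⟨r, by exact_mod_cast hr, (p.summable_norm_mul_pow hrp).of_nonneg_of_le
    (fun n ↦ by positivity) fun n ↦ ?_⟩
  gcongr
  rw [div_le_iff₀' (by positivity), iteratedDeriv_eq_iteratedFDeriv, ← hp.factorial_smul,
    ← Nat.cast_smul_eq_nsmul 𝕜, norm_smul, RCLike.norm_natCast]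
  gcongr
  simp

lemma tendsto_one_sub_cos_div_sq (x : ℝ) :
    Tendsto (fun t ↦ (1 - Real.cos (t * x)) / t ^ 2) (𝓝[≠] 0) (𝓝 (x ^ 2 / 2)) := by
  have hlim : Tendsto (fun t ↦ x ^ 2 / 2 * Real.sinc (t * x / 2) ^ 2) (𝓝[≠] 0) (𝓝 (x ^ 2 / 2)) :=
    (Continuous.tendsto' (by fun_prop) _ _ (by simp)).mono_left nhdsWithin_le_nhds
  refine hlim.congr' (eventually_mem_nhdsWithin.mono fun t (ht : t ≠ 0) ↦ ?_)
  rcases eq_or_ne x 0 with rfl | hx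
  · simp
  have hcos : Real.cos (t * x) = 1 - 2 * Real.sin (t * x / 2) ^ 2 := by
    rw [← Real.cos_two_mul_eq_one_sub, mul_div_cancel₀ _ two_ne_zero]
  dsimp only
  rw [Real.sinc_of_ne_zero (by positivity), hcos]
  field_simp
  ring

end Analysis

section Integrability

variable {Ω : Type*} {mΩ : MeasurableSpace Ω} {X : Ω → ℝ} {r : ℝ}

lemma integrable_of_hasSum_of_nonneg {ι : Type*} [Countable ι] {P : Measure Ω} {f : ι → Ω → ℝ}
    {g : Ω → ℝ} (hf : ∀ i, Integrable (f i) P) (hf_nonneg : ∀ i, 0 ≤ f i)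
    (hsum : Summable fun i ↦ ∫ ω, f i ω ∂P) (hg : ∀ ω, HasSum (f · ω) (g ω)) :
    Integrable g P := by
  have hg_eq : g = fun ω ↦ (∑' i, ENNReal.ofReal (f i ω)).toReal := by
    ext ω
    rw [← ENNReal.ofReal_tsum_of_nonneg (hf_nonneg · ω) (hg ω).summable, (hg ω).tsum_eq,
      ENNReal.toReal_ofReal ((hg ω).nonneg (hf_nonneg · ω))]
  have hmeas (i) : AEMeasurable (fun ω ↦ ENNReal.ofReal (f i ω)) P :=
    (hf i).aemeasurable.ennreal_ofReal
  rw [hg_eq]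
  refine integrable_toReal_of_lintegral_ne_top (AEMeasurable.tsum hmeas) ?_
  simp_rw [lintegral_tsum hmeas,
    ← ofReal_integral_eq_lintegral_ofReal (hf _) (.of_forall (hf_nonneg _))]
  exact hsum.tsum_ofReal_ne_top

lemma integrable_cosh_of_summable_moment {P : Measure Ω}
    (hint : ∀ n : ℕ, Integrable (fun ω ↦ X ω ^ (2 * n)) P)
    (hsum : Summable fun n : ℕ ↦ (∫ ω, X ω ^ (2 * n) ∂P) / (2 * n)! * r ^ (2 * n)) :
    Integrable (fun ω ↦ Real.cosh (r * X ω)) P := by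
  have hterm (n : ℕ) (ω : Ω) :
      (r * X ω) ^ (2 * n) / (2 * n)! = X ω ^ (2 * n) * (r ^ (2 * n) / (2 * n)!) := by
    ring
  refine integrable_of_hasSum_of_nonneg (fun n ↦ ?_) (fun n ω ↦ ?_) ?_
    fun ω ↦ Real.hasSum_cosh (r * X ω)
  · simpa only [hterm] using (hint n).mul_const _
  · exact div_nonneg ((even_two_mul n).pow_nonneg _) (Nat.cast_nonneg _)
  · simp_rw [hterm, integral_mul_const]
    exact hsum.congr fun n ↦ by ring

lemma zero_mem_interior_integrableExpSet_of_integrable_cosh {P : Measure Ω}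
    (hX : AEMeasurable X P) (hr : 0 < r) (h : Integrable (fun ω ↦ Real.cosh (r * X ω)) P) :
    0 ∈ interior (integrableExpSet X P) := by
  have hexp {s : ℝ} (hs : |s| = r) : Integrable (fun ω ↦ Real.exp (s * X ω)) P := by
    refine (h.const_mul 2).mono' (by fun_prop) (.of_forall fun ω ↦ ?_)
    calc ‖Real.exp (s * X ω)‖ ≤ Real.exp |s * X ω| := by
          simpa using le_abs_self (s * X ω)
      _ ≤ Real.exp (s * X ω) + Real.exp (-(s * X ω)) := Real.exp_abs_le _
      _ = 2 * Real.cosh (r * X ω) := by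
          rw [← Real.cosh_abs (r * X ω), abs_mul, abs_of_pos hr, ← hs, ← abs_mul, Real.cosh_abs,
            Real.cosh_eq]
          ring
  refine mem_interior.2 ⟨Ioo (-r) r, fun s hs ↦ ?_, isOpen_Ioo, neg_lt_zero.2 hr, hr⟩
  exact integrable_exp_mul_of_abs_le (hexp (abs_of_pos hr)) (hexp (by simpa using hr.le))
    (by simpa only [abs_of_pos hr] using (abs_lt.2 hs).le)

end Integrability

section CharFun

lemma analyticOnNhd_charFun {μ : Measure ℝ} (h : 0 ∈ interior (integrableExpSet id μ)) :
    AnalyticOnNhd ℝ (charFun μ) univ := by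
  intro t _
  have hmgf : AnalyticAt ℂ (complexMGF id μ) (t * I) := analyticAt_complexMGF (by simpa using h)
  have hline : AnalyticAt ℝ (fun s : ℝ ↦ (s : ℂ) * I) t :=
    (ofRealCLM.analyticAt t).mul analyticAt_const
  simpa [Function.comp_def, complexMGF_id_mul_I] using
    hmgf.restrictScalars.comp_of_eq hline rfl

variable {μ ν : Measure ℝ} [IsFiniteMeasure μ] [IsFiniteMeasure ν] {k : ℕ}

lemma memLp_id_natCast_iff_integrable_pow (hk : Even k) :
    MemLp id k μ ↔ Integrable (fun x ↦ x ^ k) μ := by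
  rcases eq_or_ne k 0 with rfl | hk0
  · simpa using aestronglyMeasurable_id
  · rw [← integrable_norm_rpow_iff aestronglyMeasurable_id (by simpa) (ENNReal.natCast_ne_top k)]
    simp [hk.pow_abs]

lemma integrable_cos_mul (t : ℝ) : Integrable (fun x ↦ Real.cos (t * x)) μ :=
  .of_bound (by fun_prop) 1 (.of_forall fun x ↦ Real.abs_cos_le_one (t * x))

lemma integrable_sq_of_isBigO_integral_one_sub_cos
    (h : (fun t ↦ ∫ x, (1 - Real.cos (t * x)) ∂μ) =O[𝓝[≠] 0] fun t ↦ t ^ 2) :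
    Integrable (fun x ↦ x ^ 2) μ := by
  have hint (t : ℝ) : Integrable (fun x ↦ 1 - Real.cos (t * x)) μ :=
    (integrable_const 1).sub (integrable_cos_mul t)
  obtain ⟨C, hC⟩ := h.bound
  obtain ⟨t, ht⟩ := exists_seq_tendsto (𝓝[≠] (0 : ℝ))
  have hbound : ∀ᶠ n in atTop,
      ∫⁻ x, ‖(1 - Real.cos (t n * x)) / t n ^ 2‖ₑ ∂μ ≤ ENNReal.ofReal C := by
    filter_upwards [ht.eventually hC, ht.eventually self_mem_nhdsWithin] with n hn (hn0 : t n ≠ 0)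
    have hnonneg (x : ℝ) : 0 ≤ (1 - Real.cos (t n * x)) / t n ^ 2 :=
      div_nonneg (sub_nonneg.2 (Real.cos_le_one _)) (sq_nonneg _)
    simp_rw [Real.enorm_of_nonneg (hnonneg _)]
    rw [← ofReal_integral_eq_lintegral_ofReal ((hint _).div_const _)
      (.of_forall hnonneg), integral_div]
    gcongr
    rw [div_le_iff₀ (by positivity)]
    simpa using (le_abs_self _).trans hn
  have hhalf : Integrable (fun x ↦ x ^ 2 / 2) μ :=
    integrable_of_tendsto (.of_forall fun x ↦ (tendsto_one_sub_cos_div_sq x).comp ht)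
      (fun n ↦ ((hint (t n)).div_const _).aestronglyMeasurable)
      ((liminf_le_of_frequently_le' hbound.frequently).trans_lt ENNReal.ofReal_lt_top).ne
  simpa using hhalf.mul_const 2

lemma charFun_add_charFun_neg_sub (t : ℝ) :
    charFun μ t + charFun μ (-t) - 2 * charFun μ 0 =
      ((-2 * ∫ x, (1 - Real.cos (t * x)) ∂μ : ℝ) : ℂ) := by
  have hre : (charFun μ t).re = ∫ x, Real.cos (t * x) ∂μ := by
    have hexp : Integrable (fun x : ℝ ↦ cexp ((t * x : ℝ) * I)) μ :=
      .of_bound (by fun_prop) 1 (.of_forall fun x ↦ (norm_exp_ofReal_mul_I _).le)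
    rw [charFun_apply_real]
    simpa only [ofReal_mul, RCLike.re_to_complex, ← exp_ofReal_mul_I_re] using
      (integral_re hexp).symm
  rw [charFun_neg, add_conj, hre, charFun_zero,
    integral_sub (integrable_const 1) (integrable_cos_mul t), integral_const, smul_eq_mul, mul_one]
  push_cast
  ring

lemma integrable_sq_of_contDiffAt_charFun (h : ContDiffAt ℝ 2 (charFun μ) 0) :
    Integrable (fun x ↦ x ^ 2) μ := by
  refine integrable_sq_of_isBigO_integral_one_sub_cos (.mono ?_ nhdsWithin_le_nhds)
  have hdiff := isBigO_second_difference h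
  simp only [zero_add, zero_sub, real_smul, ofReal_ofNat, charFun_add_charFun_neg_sub] at hdiff
  rwa [isBigO_ofReal_left, isBigO_const_mul_left_iff (by norm_num)] at hdiff

lemma iteratedDeriv_charFun_eq_charFun_withDensity (hk : Even k) (hint : MemLp id k μ) (t : ℝ) :
    iteratedDeriv k (charFun μ) t =
      I ^ k * charFun (μ.withDensity fun x ↦ ENNReal.ofReal (x ^ k)) t := by
  rw [iteratedDeriv_charFun hint, charFun_apply_real, integral_withDensity_eq_integral_toReal_smul
    (by fun_prop) (.of_forall fun _ ↦ ENNReal.ofReal_lt_top)]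
  simp [ENNReal.toReal_ofReal (hk.pow_nonneg _)]

theorem memLp_id_of_contDiffAt_charFun (n : ℕ) (h : ContDiffAt ℝ (2 * n : ℕ) (charFun μ) 0) :
    MemLp id (2 * n : ℕ) μ := by
  induction n with
  | zero => simpa using aestronglyMeasurable_id
  | succ n ih =>
    have hn := even_two_mul n
    have hint := ih (h.of_le (by gcongr; simp))
    let ρ := μ.withDensity fun x ↦ ENNReal.ofReal (x ^ (2 * n))
    have : IsFiniteMeasure ρ :=
      isFiniteMeasure_withDensity_ofReal ((memLp_id_natCast_iff_integrable_pow hn).1 hint).2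
    have hρ : charFun ρ = fun t ↦ (I ^ (2 * n))⁻¹ * iteratedDeriv (2 * n) (charFun μ) t := by
      ext t
      rw [iteratedDeriv_charFun_eq_charFun_withDensity hn hint, inv_mul_cancel_left₀ (by simp)]
    have hsmooth : ContDiffAt ℝ 2 (charFun ρ) 0 := by
      rw [hρ]
      exact contDiffAt_const.mul (contDiffAt_iteratedDeriv h (by norm_cast; lia))
    rw [memLp_id_natCast_iff_integrable_pow (even_two_mul _)]
    have hsq := integrable_sq_of_contDiffAt_charFun hsmooth
    rw [integrable_withDensity_iff_integrable_smul' (by fun_prop)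
      (.of_forall fun _ ↦ ENNReal.ofReal_lt_top)] at hsq
    simpa [ENNReal.toReal_ofReal (hn.pow_nonneg _), ← pow_add, mul_add] using hsq

lemma zero_mem_interior_integrableExpSet_of_analyticAt_charFun (h : AnalyticAt ℝ (charFun μ) 0) :
    0 ∈ interior (integrableExpSet id μ) := by
  have hint (n : ℕ) : MemLp id (2 * n : ℕ) μ := memLp_id_of_contDiffAt_charFun n h.contDiffAt
  have hnorm (n : ℕ) : ‖iteratedDeriv (2 * n) (charFun μ) 0‖ = ∫ x, x ^ (2 * n) ∂μ := by
    have hnonneg : 0 ≤ ∫ x, x ^ (2 * n) ∂μ := integral_nonneg fun x ↦ (even_two_mul n).pow_nonneg x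
    rw [iteratedDeriv_charFun_zero (hint n), norm_mul, norm_pow, norm_I, one_pow, one_mul,
      norm_real, Real.norm_of_nonneg hnonneg]
  obtain ⟨r, hr, hsum⟩ := exists_summable_norm_iteratedDeriv h
  refine zero_mem_interior_integrableExpSet_of_integrable_cosh aemeasurable_id hr <|
    integrable_cosh_of_summable_moment
      (fun n ↦ (memLp_id_natCast_iff_integrable_pow (even_two_mul n)).1 (hint n)) ?_
  simpa [Function.comp_def, hnorm] using
    hsum.comp_injective (mul_right_injective₀ (two_ne_zero' ℕ))

theorem eq_of_charFun_eventuallyEq_of_analyticAt (h : AnalyticAt ℝ (charFun μ) 0)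
    (hμν : charFun μ =ᶠ[𝓝 0] charFun ν) : μ = ν := by
  have hμ := analyticOnNhd_charFun (zero_mem_interior_integrableExpSet_of_analyticAt_charFun h)
  have hν := analyticOnNhd_charFun
    (zero_mem_interior_integrableExpSet_of_analyticAt_charFun (h.congr hμν))
  exact Measure.ext_of_charFun (hμ.eq_of_eventuallyEq hν hμν)

end CharFun

theorem stmt_4 (a : ℝ) (ha : 0 < a) (F : ℝ → ℂ)
    (hF : AnalyticAt ℝ F 0)
    (μ ν : Measure ℝ) [IsFiniteMeasure μ] [IsFiniteMeasure ν]
    (hμ : ∀ x ∈ Set.Ioo (-a) a,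
      (∫ l, Complex.exp (Complex.I * (l : ℂ) * (x : ℂ)) ∂μ) = F x)
    (hν : ∀ x ∈ Set.Ioo (-a) a,
      (∫ l, Complex.exp (Complex.I * (l : ℂ) * (x : ℂ)) ∂ν) = F x) :
    μ = ν := by
  have hcharFun (ρ : Measure ℝ) (x : ℝ) :
      ∫ l, cexp (I * (l : ℂ) * (x : ℂ)) ∂ρ = charFun ρ x := by
    simp only [charFun_apply_real, mul_comm, mul_left_comm]
  simp only [hcharFun] at hμ hν
  have hnhds : Ioo (-a) a ∈ 𝓝 0 := Ioo_mem_nhds (neg_lt_zero.2 ha) ha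
  have hFμ : F =ᶠ[𝓝 0] charFun μ := eventually_of_mem hnhds fun x hx ↦ (hμ x hx).symm
  have hFν : F =ᶠ[𝓝 0] charFun ν := eventually_of_mem hnhds fun x hx ↦ (hν x hx).symm
  exact eq_of_charFun_eventuallyEq_of_analyticAt (hF.congr hFμ) (hFμ.symm.trans hFν)
end
end

section
/- (Carleman) Let μ and ν be positive Borel measures on ℝ such that t ↦ |t|ⁿ is μ-integrable and ν-integrable for every n ∈ ℕ, and suppose the moments agree: mₙ := ∫_ℝ tⁿ dμ(t) = ∫_ℝ tⁿ dν(t) for all n ≥ 0. If the series ∑_{k=1}^∞ m_{2k}^{−1/(2k)} diverges (the Carleman condition), then μ = ν. -/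
open MeasureTheory

noncomputable section

/-!
By a criterion of Denjoy–Carleman type, a smooth function whose derivatives at one point all vanish
is zero, provided that its derivatives are bounded by a positive log-convex sequence `M` with
`∑ M n / M (n + 1) = ∞`. It is applied to the difference of the characteristic functions of `μ` and
`ν` at the origin, where the derivatives are moments up to a power of `I`; its `n`-th derivative is
bounded by the absolute moment `M n` of `μ + ν`, which is log-convex in `n` by Cauchy–Schwarz.
Since `M 0 / M n` is a product of `n` consecutive ratios, Carleman's inequality for geometric means
turns the Carleman condition into divergence of `∑ M n / M (n + 1)`.
-/

open Filter Real Finset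
open scoped ContDiff Topology

section CarlemanInequality

/-- The weights in Pólya's proof of Carleman's inequality, chosen so that the product of the first
`n` of them is `(n + 1) ^ n` while `carlemanWeight i / (i + 1)` stays below `e`. -/
def carlemanWeight (i : ℕ) : ℝ := ((i : ℝ) + 2) ^ (i + 1) / ((i : ℝ) + 1) ^ i

lemma carlemanWeight_pos (i : ℕ) : 0 < carlemanWeight i := by
  unfold carlemanWeight
  positivity

lemma carlemanWeight_le (i : ℕ) : carlemanWeight i ≤ exp 1 * (i + 1) := by
  have hweight : carlemanWeight i = (1 + ((i + 1 : ℕ) : ℝ)⁻¹) ^ (i + 1) * (i + 1) := by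
    have hbase : 1 + ((i + 1 : ℕ) : ℝ)⁻¹ = (i + 2) / (i + 1) := by
      push_cast
      field_simp
      ring
    rw [carlemanWeight, hbase, div_pow]
    field_simp
    ring
  rw [hweight]
  gcongr
  exact one_add_inv_pow_le_exp

lemma prod_carlemanWeight (n : ℕ) :
    ∏ i ∈ range n, carlemanWeight i = ((n : ℝ) + 1) ^ n := by
  induction n with
  | zero => simp
  | succ n ih =>
    rw [prod_range_succ, ih, carlemanWeight]
    push_cast
    field_simp
    ring

lemma sum_range_partialSum_div (b : ℕ → ℝ) (N : ℕ) :
    ∑ n ∈ range N, (∑ i ∈ range (n + 1), b i) / (((n : ℝ) + 1) * (n + 2)) =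
      ∑ i ∈ range N, b i / (i + 1) - (∑ i ∈ range N, b i) / (N + 1) := by
  induction N with
  | zero => simp
  | succ N ih =>
    rw [sum_range_succ, ih, sum_range_succ b, sum_range_succ (fun i ↦ b i / ((i : ℝ) + 1))]
    push_cast
    field_simp
    ring

variable {a : ℕ → ℝ}

lemma geomMean_le_sum_carlemanWeight_mul (ha : ∀ n, 0 ≤ a n) (n : ℕ) :
    (∏ i ∈ range (n + 1), a i) ^ (1 / ((n : ℝ) + 1)) ≤
      (∑ i ∈ range (n + 1), carlemanWeight i * a i) / ((n + 1) * (n + 2)) := by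
  have hprod : 0 ≤ ∏ i ∈ range (n + 1), a i := prod_nonneg fun i _ ↦ ha i
  have amgm := geom_mean_le_arith_mean (range (n + 1)) (fun _ ↦ 1)
    (fun i ↦ carlemanWeight i * a i) (by simp)
    (sum_pos (fun _ _ ↦ one_pos) nonempty_range_add_one)
    (fun i _ ↦ mul_nonneg (carlemanWeight_pos i).le (ha i))
  simp only [rpow_one, one_mul, sum_const, card_range, nsmul_eq_mul, mul_one, prod_mul_distrib,
    prod_carlemanWeight] at amgm
  rw [mul_rpow (by positivity) hprod, pow_rpow_inv_natCast (by positivity) n.succ_ne_zero] at amgm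
  push_cast at amgm
  rw [one_div, ← div_div, le_div_iff₀ (by positivity)]
  linarith

/-- **Carleman's inequality**, with its sharp constant -/
theorem sum_geomMean_le (ha : ∀ n, 0 ≤ a n) (N : ℕ) :
    ∑ n ∈ range N, (∏ i ∈ range (n + 1), a i) ^ (1 / ((n : ℝ) + 1)) ≤
      exp 1 * ∑ n ∈ range N, a n := by
  have hweighted : 0 ≤ (∑ i ∈ range N, carlemanWeight i * a i) / ((N : ℝ) + 1) :=
    div_nonneg (sum_nonneg fun i _ ↦ mul_nonneg (carlemanWeight_pos i).le (ha i)) (by positivity)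
  calc ∑ n ∈ range N, (∏ i ∈ range (n + 1), a i) ^ (1 / ((n : ℝ) + 1))
      ≤ ∑ n ∈ range N,
          (∑ i ∈ range (n + 1), carlemanWeight i * a i) / (((n : ℝ) + 1) * (n + 2)) :=
        sum_le_sum fun n _ ↦ geomMean_le_sum_carlemanWeight_mul ha n
    _ ≤ ∑ i ∈ range N, carlemanWeight i * a i / (i + 1) := by
        rw [sum_range_partialSum_div]
        linarith
    _ ≤ ∑ i ∈ range N, exp 1 * a i := by
        refine sum_le_sum fun i _ ↦ ?_
        rw [div_le_iff₀ (by positivity), mul_right_comm]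
        exact mul_le_mul_of_nonneg_right (carlemanWeight_le i) (ha i)
    _ = exp 1 * ∑ n ∈ range N, a n := (mul_sum ..).symm

lemma summable_geomMean (ha : ∀ n, 0 ≤ a n) (hs : Summable a) :
    Summable fun n : ℕ ↦ (∏ i ∈ range (n + 1), a i) ^ (1 / ((n : ℝ) + 1)) :=
  summable_of_sum_range_le (c := exp 1 * ∑' n, a n)
    (fun _ ↦ rpow_nonneg (prod_nonneg fun i _ ↦ ha i) _) fun N ↦
    (sum_geomMean_le ha N).trans <|
      mul_le_mul_of_nonneg_left (hs.sum_le_tsum _ fun i _ ↦ ha i) (exp_pos 1).le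

end CarlemanInequality

section Ratios

lemma rpow_le_max_one_inv {c p : ℝ} (hc : 0 < c) (hp : p ∈ Set.Icc (-1) 0) :
    c ^ p ≤ max 1 c⁻¹ := by
  calc c ^ p = c⁻¹ ^ (-p) := by rw [rpow_neg (inv_nonneg.2 hc.le), inv_rpow hc.le, inv_inv]
    _ ≤ max 1 c⁻¹ ^ (-p) :=
        rpow_le_rpow (inv_nonneg.2 hc.le) (le_max_right ..) (neg_nonneg.2 hp.2)
    _ ≤ max 1 c⁻¹ ^ (1 : ℝ) := rpow_le_rpow_of_exponent_le (le_max_left ..) (neg_le.2 hp.1)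
    _ = max 1 c⁻¹ := rpow_one _

lemma summable_const_mul_rpow {ι : Type*} {u p : ι → ℝ} {c : ℝ} (hc : 0 < c) (hu : ∀ i, 0 ≤ u i)
    (hp : ∀ i, p i ∈ Set.Icc (-1) 0) (hs : Summable fun i ↦ u i ^ p i) :
    Summable fun i ↦ (c * u i) ^ p i := by
  refine (hs.mul_left (max 1 c⁻¹)).of_nonneg_of_le
    (fun i ↦ rpow_nonneg (mul_nonneg hc.le (hu i)) _) fun i ↦ ?_
  rw [mul_rpow hc.le (hu i)]
  exact mul_le_mul_of_nonneg_right (rpow_le_max_one_inv hc (hp i)) (rpow_nonneg (hu i) _)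

lemma neg_one_div_natCast_add_one_mem_Icc (n : ℕ) : -1 / ((n : ℝ) + 1) ∈ Set.Icc (-1) 0 := by
  refine ⟨?_, div_nonpos_of_nonpos_of_nonneg (by norm_num) (by positivity)⟩
  rw [le_div_iff₀ (by positivity)]
  linarith [n.cast_nonneg (α := ℝ)]

lemma prod_range_div_succ {K : Type*} [Field K] {M : ℕ → K} (hM : ∀ n, M n ≠ 0) (n : ℕ) :
    ∏ i ∈ range n, M i / M (i + 1) = M 0 / M n := by
  induction n with
  | zero => simp [hM 0]
  | succ n ih => rw [prod_range_succ, ih, div_mul_div_cancel₀ (hM n)]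

variable {M : ℕ → ℝ}

lemma summable_rpow_neg_one_div_of_summable_div (hM : ∀ n, 0 < M n)
    (hs : Summable fun n ↦ M n / M (n + 1)) :
    Summable fun n : ℕ ↦ M (n + 1) ^ (-1 / ((n : ℝ) + 1)) := by
  have hgeom : Summable fun n : ℕ ↦ (M (n + 1) / M 0) ^ (-1 / ((n : ℝ) + 1)) := by
    refine (summable_geomMean (fun n ↦ (div_pos (hM n) (hM (n + 1))).le) hs).congr fun n ↦ ?_
    rw [prod_range_div_succ fun n ↦ (hM n).ne', neg_div,
      rpow_neg (div_pos (hM _) (hM _)).le, ← inv_rpow (div_pos (hM _) (hM _)).le, inv_div]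
  refine (summable_const_mul_rpow (hM 0) (fun n ↦ (div_pos (hM _) (hM _)).le)
    neg_one_div_natCast_add_one_mem_Icc hgeom).congr fun n ↦ ?_
  rw [mul_div_cancel₀ _ (hM 0).ne']

lemma not_summable_div_of_not_summable_even_rpow {m : ℕ → ℝ} {c : ℝ} (hc : 0 < c)
    (hM : ∀ n, 0 < M n) (hMm : ∀ k, M (2 * (k + 1)) = c * m k)
    (hm : ¬ Summable fun k : ℕ ↦ m k ^ (-1 / (2 * ((k : ℝ) + 1)))) :
    ¬ Summable fun n ↦ M n / M (n + 1) := by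
  refine fun hs ↦ hm ?_
  have hinj : Function.Injective fun k : ℕ ↦ 2 * k + 1 := fun i j hij ↦ by simpa using hij
  have heven := (summable_rpow_neg_one_div_of_summable_div hM hs).comp_injective hinj
  refine (summable_const_mul_rpow (inv_pos.2 hc) (fun k ↦ (hM _).le)
    (fun k ↦ neg_one_div_natCast_add_one_mem_Icc _) heven).congr fun k ↦ ?_
  rw [show 2 * k + 1 + 1 = 2 * (k + 1) by ring, hMm, inv_mul_cancel_left₀ hc.ne']
  congr 2
  push_cast
  ring

lemma monotone_div_of_sq_le_mul (hM : ∀ n, 0 < M n)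
    (hlog : ∀ n, M (n + 1) ^ 2 ≤ M n * M (n + 2)) : Monotone fun n ↦ M (n + 1) / M n := by
  refine monotone_nat_of_le_succ fun n ↦ ?_
  rw [div_le_div_iff₀ (hM n) (hM (n + 1))]
  linarith [hlog n]

end Ratios

section DenjoyCarleman

variable {E : Type*} [NormedAddCommGroup E] [NormedSpace ℝ E] {f : ℝ → E} {M : ℕ → ℝ}

/-- Flatness of order `k` of `f` at `x`, relative to the sequence `M`: Bang's norm
`sup_n ‖f⁽ⁿ⁾(x)‖ / (eⁿ M n)` is at most `e⁻ᵏ`. -/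
def BangFlat (f : ℝ → E) (M : ℕ → ℝ) (k : ℕ) (x : ℝ) : Prop :=
  ∀ n : ℕ, ‖iteratedDeriv n f x‖ ≤ M n * exp (n - k)

namespace BangFlat

lemma of_iteratedDeriv_eq_zero (hM : ∀ n, 0 < M n) {x : ℝ} (hx : ∀ n, iteratedDeriv n f x = 0)
    (k : ℕ) : BangFlat f M k x := fun n ↦ by
  rw [hx, norm_zero]
  exact mul_nonneg (hM n).le (exp_pos _).le

/- Downward induction on `n`: for `n = k + 1` this is the global bound, and the right-hand side
dominates the integral of the corresponding one for `n + 1` because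
`M (n + 1) ≤ M n * (M (k + 1) / M k)`. -/
lemma norm_iteratedDeriv_le (hf : ContDiff ℝ ∞ f) (hM : ∀ n, 0 < M n)
    (hratio : Monotone fun n ↦ M (n + 1) / M n) (hbound : ∀ n x, ‖iteratedDeriv n f x‖ ≤ M n)
    {k : ℕ} {x : ℝ} (hx : BangFlat f M (k + 1) x) {n : ℕ} (hn : n ≤ k + 1) :
    ∀ y, x ≤ y → ‖iteratedDeriv n f y‖ ≤
      M n * exp (n - (k + 1)) * exp (exp 1 * (M (k + 1) / M k) * (y - x)) := by
  set r := M (k + 1) / M k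
  have hr : 0 < r := div_pos (hM _) (hM _)
  induction hn using Nat.decreasingInduction with
  | self =>
    intro y hxy
    have hexp : 1 ≤ exp (exp 1 * r * (y - x)) :=
      one_le_exp (mul_nonneg (by positivity) (sub_nonneg.2 hxy))
    push_cast
    rw [sub_self, exp_zero, mul_one]
    exact (hbound _ _).trans (le_mul_of_one_le_right (hM _).le hexp)
  | of_succ n hn ih =>
    intro y hxy
    have hMn : M (n + 1) ≤ r * M n := (div_le_iff₀ (hM n)).1 (hratio (Nat.le_of_lt_succ hn))
    have hderiv (z : ℝ) : HasDerivAt (iteratedDeriv n f) (iteratedDeriv (n + 1) f z) z := by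
      rw [iteratedDeriv_succ]
      exact (hf.differentiable_iteratedDeriv n (mod_cast ENat.natCast_lt_top n) z).hasDerivAt
    have hderiv_bound (z : ℝ) :
        HasDerivAt (fun z ↦ M n * exp (n - (k + 1)) * exp (exp 1 * r * (z - x)))
          (M n * exp (n - (k + 1)) * (exp (exp 1 * r * (z - x)) * (exp 1 * r))) z := by
      simpa using ((((hasDerivAt_id z).sub_const x).const_mul (exp 1 * r)).exp).const_mul
        (M n * exp (n - (k + 1)))
    refine image_norm_le_of_norm_deriv_right_le_deriv_boundary
      (fun z _ ↦ (hderiv z).continuousAt.continuousWithinAt)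
      (fun z _ ↦ (hderiv z).hasDerivWithinAt) ?_ hderiv_bound (fun z hz ↦ ?_) ⟨hxy, le_rfl⟩
    · simpa using hx n
    · calc ‖iteratedDeriv (n + 1) f z‖
          ≤ M (n + 1) * exp ((n + 1 : ℕ) - (k + 1)) * exp (exp 1 * r * (z - x)) := ih z hz.1
        _ ≤ r * M n * exp ((n + 1 : ℕ) - (k + 1)) * exp (exp 1 * r * (z - x)) := by gcongr
        _ = M n * exp (n - (k + 1)) * (exp (exp 1 * r * (z - x)) * (exp 1 * r)) := by
          rw [show ((n + 1 : ℕ) : ℝ) - (k + 1) = (n - (k + 1)) + 1 by push_cast; ring, exp_add]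
          ring

lemma of_succ (hf : ContDiff ℝ ∞ f) (hM : ∀ n, 0 < M n)
    (hratio : Monotone fun n ↦ M (n + 1) / M n) (hbound : ∀ n x, ‖iteratedDeriv n f x‖ ≤ M n)
    {k : ℕ} {x y : ℝ} (hx : BangFlat f M (k + 1) x) (hxy : x ≤ y)
    (hyx : exp 1 * (y - x) ≤ M k / M (k + 1)) : BangFlat f M k y := by
  intro n
  rcases le_total n k with hn | hn
  · have hexponent : exp 1 * (M (k + 1) / M k) * (y - x) ≤ 1 := by
      rw [le_div_iff₀ (hM _)] at hyx
      rw [← mul_div_assoc, div_mul_eq_mul_div, div_le_one (hM k)]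
      linarith
    have hM_pos := hM n
    calc ‖iteratedDeriv n f y‖
        ≤ M n * exp (n - (k + 1)) * exp (exp 1 * (M (k + 1) / M k) * (y - x)) :=
          hx.norm_iteratedDeriv_le hf hM hratio hbound (hn.trans k.le_succ) y hxy
      _ ≤ M n * exp (n - (k + 1)) * exp 1 := by gcongr
      _ = M n * exp (n - k) := by
          rw [mul_assoc, ← exp_add]
          ring_nf
  · exact (hbound n y).trans <| le_mul_of_one_le_right (hM n).le <|
      one_le_exp <| sub_nonneg.2 <| mod_cast hn

lemma of_le_sum_div (hf : ContDiff ℝ ∞ f) (hM : ∀ n, 0 < M n)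
    (hratio : Monotone fun n ↦ M (n + 1) / M n) (hbound : ∀ n x, ‖iteratedDeriv n f x‖ ≤ M n)
    {a : ℝ} (ha : ∀ n, iteratedDeriv n f a = 0) (d k : ℕ) {x : ℝ} (hax : a ≤ x)
    (hx : exp 1 * (x - a) ≤ ∑ i ∈ range d, M (i + k) / M (i + k + 1)) : BangFlat f M k x := by
  induction d generalizing k x with
  | zero =>
    have hxa : x ≤ a := by
      rw [range_zero, sum_empty] at hx
      exact sub_nonpos.1 (nonpos_of_mul_nonpos_right hx (exp_pos 1))
    exact hxa.antisymm hax ▸ of_iteratedDeriv_eq_zero hM ha k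
  | succ d ih =>
    set δ := M k / M (k + 1) / exp 1
    have hδ : exp 1 * δ = M k / M (k + 1) := mul_div_cancel₀ _ (exp_pos 1).ne'
    have hδ_pos : 0 < δ := div_pos (div_pos (hM _) (hM _)) (exp_pos 1)
    have hy : exp 1 * (max a (x - δ) - a) ≤
        ∑ i ∈ range d, M (i + k + 1) / M (i + k + 1 + 1) := by
      rw [← max_sub_sub_right, sub_self, mul_max_of_nonneg _ _ (exp_pos 1).le, mul_zero]
      refine max_le (sum_nonneg fun i _ ↦ (div_pos (hM _) (hM _)).le) ?_
      simp only [sum_range_succ', zero_add, add_right_comm _ 1 k] at hx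
      linarith
    refine (ih (k + 1) (le_max_left ..) hy).of_succ hf hM hratio hbound
      (max_le hax (sub_le_self x hδ_pos.le)) ?_
    rw [← hδ]
    exact mul_le_mul_of_nonneg_left (sub_le_comm.1 (le_max_right ..)) (exp_pos 1).le

end BangFlat

lemma eq_zero_of_forall_bangFlat {x : ℝ} (hx : ∀ k, BangFlat f M k x) : f x = 0 := by
  have hlim : Tendsto (fun k : ℕ ↦ M 0 * exp (-(k : ℝ))) atTop (𝓝 (M 0 * 0)) :=
    (tendsto_exp_neg_atTop_nhds_zero.comp tendsto_natCast_atTop_atTop).const_mul _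
  have hle (k : ℕ) : ‖f x‖ ≤ M 0 * exp (-(k : ℝ)) := by simpa using hx k 0
  rw [mul_zero] at hlim
  exact norm_le_zero_iff.1 (ge_of_tendsto' hlim hle)

variable (hf : ContDiff ℝ ∞ f) (hM : ∀ n, 0 < M n)
    (hlog : ∀ n, M (n + 1) ^ 2 ≤ M n * M (n + 2)) (hbound : ∀ n x, ‖iteratedDeriv n f x‖ ≤ M n)
    (hdiv : ¬ Summable fun n ↦ M n / M (n + 1)) {a : ℝ} (ha : ∀ n, iteratedDeriv n f a = 0)
include hf hM hlog hbound hdiv ha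

lemma eq_zero_of_le_of_denjoyCarleman {x : ℝ} (hax : a ≤ x) : f x = 0 := by
  refine eq_zero_of_forall_bangFlat (M := M) fun k ↦ ?_
  have htail : ¬ Summable fun i ↦ M (i + k) / M (i + k + 1) := by
    rwa [summable_nat_add_iff k (f := fun n ↦ M n / M (n + 1))]
  rw [not_summable_iff_tendsto_nat_atTop_of_nonneg fun i ↦ (div_pos (hM _) (hM _)).le] at htail
  obtain ⟨d, hd⟩ := (htail.eventually_ge_atTop (exp 1 * (x - a))).exists
  exact .of_le_sum_div hf hM (monotone_div_of_sq_le_mul hM hlog) hbound ha d k hax hd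

theorem eq_zero_of_denjoyCarleman : f = 0 := by
  ext x
  rcases le_total a x with hax | hxa
  · exact eq_zero_of_le_of_denjoyCarleman hf hM hlog hbound hdiv ha hax
  · have hbound_neg (n : ℕ) (y : ℝ) : ‖iteratedDeriv n (fun z ↦ f (-z)) y‖ ≤ M n := by
      simpa [iteratedDeriv_comp_neg, norm_smul] using hbound n (-y)
    have ha_neg (n : ℕ) : iteratedDeriv n (fun z ↦ f (-z)) (-a) = 0 := by
      simp [iteratedDeriv_comp_neg, ha]
    simpa using eq_zero_of_le_of_denjoyCarleman (hf.comp contDiff_neg) hM hlog hbound_neg hdiv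
      ha_neg (neg_le_neg hxa)

end DenjoyCarleman

section AbsMoment

variable {E : Type*} [NormedAddCommGroup E] [MeasurableSpace E] {ρ : Measure E} {n : ℕ}

/-- The absolute moment `∫ ‖x‖ⁿ dρ(x)` of order `n`. -/
def absMoment (ρ : Measure E) (n : ℕ) : ℝ := ∫ x, ‖x‖ ^ n ∂ρ

lemma absMoment_add_measure {ρ' : Measure E} (hρ : Integrable (fun x ↦ ‖x‖ ^ n) ρ)
    (hρ' : Integrable (fun x ↦ ‖x‖ ^ n) ρ') :
    absMoment (ρ + ρ') n = absMoment ρ n + absMoment ρ' n :=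
  integral_add_measure hρ hρ'

lemma absMoment_pos (hρ : Integrable (fun x ↦ ‖x‖ ^ n) ρ) (hρ₀ : ¬ ∀ᵐ x ∂ρ, x = 0) :
    0 < absMoment ρ n := by
  refine (integral_nonneg fun x ↦ by positivity).lt_of_ne' fun hzero ↦ hρ₀ ?_
  filter_upwards [(integral_eq_zero_iff_of_nonneg (fun x ↦ by positivity) hρ).1 hzero] with x hx
  exact norm_eq_zero.1 (eq_zero_of_pow_eq_zero hx)

lemma sq_absMoment_succ_le [OpensMeasurableSpace E] [IsFiniteMeasure ρ]
    (hρ : Integrable (fun x ↦ ‖x‖ ^ (n + 2)) ρ) :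
    absMoment ρ (n + 1) ^ 2 ≤ absMoment ρ n * absMoment ρ (n + 2) := by
  have hint {m : ℕ} (hm : m ≤ n + 2) : Integrable (fun x ↦ ‖x‖ ^ m) ρ := by
    simpa only [norm_norm] using integrable_norm_pow_of_le (f := fun x : E ↦ ‖x‖)
      measurable_norm.aestronglyMeasurable hm (by simpa only [norm_norm] using hρ)
  have hquad (c : ℝ) : 0 ≤ absMoment ρ n * (c * c) + (-2 * absMoment ρ (n + 1)) * c +
      absMoment ρ (n + 2) := by
    have hsquare : ∫ x, ‖x‖ ^ n * (‖x‖ - c) ^ 2 ∂ρ = absMoment ρ n * (c * c) +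
        (-2 * absMoment ρ (n + 1)) * c + absMoment ρ (n + 2) := by
      have hexpand (x : E) : ‖x‖ ^ n * (‖x‖ - c) ^ 2 =
          ‖x‖ ^ n * (c * c) + ‖x‖ ^ (n + 1) * (-2 * c) + ‖x‖ ^ (n + 2) := by ring
      have hn : Integrable (fun x ↦ ‖x‖ ^ n * (c * c)) ρ := (hint (by omega)).mul_const _
      have hn1 : Integrable (fun x ↦ ‖x‖ ^ (n + 1) * (-2 * c)) ρ := (hint (by omega)).mul_const _
      simp only [hexpand, absMoment]
      rw [integral_add (hn.fun_add hn1) hρ, integral_add hn hn1, integral_mul_const,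
        integral_mul_const]
      ring
    rw [← hsquare]
    exact integral_nonneg fun x ↦ by positivity
  have hdiscrim := discrim_le_zero hquad
  rw [discrim] at hdiscrim
  linarith

lemma absMoment_eq_of_even {ρ : Measure ℝ} (hn : Even n) : absMoment ρ n = ∫ t, t ^ n ∂ρ := by
  simp only [absMoment, norm_eq_abs, hn.pow_abs]

end AbsMoment

section CharFun

variable {μ ν : Measure ℝ} {n : ℕ}

lemma memLp_id_of_integrable_abs_pow (hμ : Integrable (fun t ↦ |t| ^ n) μ) : MemLp id n μ := by
  rcases eq_or_ne n 0 with rfl | hn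
  · simpa using aestronglyMeasurable_id
  · exact (integrable_norm_rpow_iff aestronglyMeasurable_id (mod_cast hn) (by simp)).1
      (by simpa using hμ)

variable [IsFiniteMeasure μ] [IsFiniteMeasure ν]

lemma norm_iteratedDeriv_charFun_le (hμ : MemLp id n μ) (t : ℝ) :
    ‖iteratedDeriv n (charFun μ) t‖ ≤ absMoment μ n := by
  rw [iteratedDeriv_charFun hμ, norm_mul, norm_pow, Complex.norm_I, one_pow, one_mul]
  refine (norm_integral_le_integral_norm _).trans_eq (integral_congr_ae (.of_forall fun x ↦ ?_))
  simp [Complex.norm_exp]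

lemma iteratedDeriv_charFun_sub (hμ : MemLp id n μ) (hν : MemLp id n ν) (t : ℝ) :
    iteratedDeriv n (charFun μ - charFun ν) t =
      iteratedDeriv n (charFun μ) t - iteratedDeriv n (charFun ν) t :=
  iteratedDeriv_sub (contDiff_charFun hμ).contDiffAt (contDiff_charFun hν).contDiffAt

lemma norm_iteratedDeriv_charFun_sub_le (hμ : MemLp id n μ) (hν : MemLp id n ν) (t : ℝ) :
    ‖iteratedDeriv n (charFun μ - charFun ν) t‖ ≤ absMoment (μ + ν) n := by
  rw [iteratedDeriv_charFun_sub hμ hν,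
    absMoment_add_measure hμ.integrable_norm_pow' hν.integrable_norm_pow']
  exact norm_sub_le_of_le (norm_iteratedDeriv_charFun_le hμ t) (norm_iteratedDeriv_charFun_le hν t)

lemma iteratedDeriv_charFun_sub_zero (hμ : MemLp id n μ) (hν : MemLp id n ν)
    (hmom : ∫ t, t ^ n ∂μ = ∫ t, t ^ n ∂ν) :
    iteratedDeriv n (charFun μ - charFun ν) 0 = 0 := by
  rw [iteratedDeriv_charFun_sub hμ hν, iteratedDeriv_charFun_zero hμ,
    iteratedDeriv_charFun_zero hν, ← hmom, sub_self]

theorem ext_of_moments_of_not_summable_absMoment_div (hμ : ∀ n : ℕ, MemLp id n μ)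
    (hν : ∀ n : ℕ, MemLp id n ν) (hmom : ∀ n : ℕ, ∫ t, t ^ n ∂μ = ∫ t, t ^ n ∂ν)
    (hpos : ∀ n, 0 < absMoment (μ + ν) n)
    (hdiv : ¬ Summable fun n ↦ absMoment (μ + ν) n / absMoment (μ + ν) (n + 1)) : μ = ν := by
  have hlog (n : ℕ) : absMoment (μ + ν) (n + 1) ^ 2 ≤
      absMoment (μ + ν) n * absMoment (μ + ν) (n + 2) :=
    sq_absMoment_succ_le <| (hμ _).integrable_norm_pow'.add_measure (hν _).integrable_norm_pow'
  refine Measure.ext_of_charFun (sub_eq_zero.1 (eq_zero_of_denjoyCarleman (a := 0) ?_ hpos hlog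
    (fun n ↦ norm_iteratedDeriv_charFun_sub_le (hμ n) (hν n)) hdiv
    fun n ↦ iteratedDeriv_charFun_sub_zero (hμ n) (hν n) (hmom n)))
  exact (contDiff_charFun' hμ).sub (contDiff_charFun' hν)

end CharFun

lemma isFiniteMeasure_of_integrable_abs_pow_zero {μ : Measure ℝ}
    (hμ : Integrable (fun t ↦ |t| ^ 0) μ) : IsFiniteMeasure μ := by
  simpa only [pow_zero, integrable_const_iff_isFiniteMeasure (one_ne_zero' ℝ)] using hμ

-- On a measure concentrated at `0` every term is `0 ^ p = 0` with `p ≠ 0`.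
lemma not_ae_eq_zero_of_not_summable_rpow_moment {μ : Measure ℝ}
    (hCarleman : ¬ Summable (fun k : ℕ =>
      (∫ t, t ^ (2 * (k + 1)) ∂μ) ^ (-(1 : ℝ) / (2 * (k + 1) : ℝ)))) :
    ¬ ∀ᵐ t ∂μ, t = 0 := by
  refine fun hzero ↦ hCarleman (summable_zero.congr fun k ↦ ?_)
  have hmoment : ∫ t, t ^ (2 * (k + 1)) ∂μ = 0 :=
    integral_eq_zero_of_ae <| hzero.mono fun t ht ↦ by simp [ht]
  rw [hmoment, zero_rpow (div_ne_zero (by norm_num) (by positivity))]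

theorem stmt_5 (μ ν : Measure ℝ)
    (hμint : ∀ n : ℕ, Integrable (fun t : ℝ => |t| ^ n) μ)
    (hνint : ∀ n : ℕ, Integrable (fun t : ℝ => |t| ^ n) ν)
    (hmom : ∀ n : ℕ, (∫ t, t ^ n ∂μ) = ∫ t, t ^ n ∂ν)
    (hCarleman : ¬ Summable (fun k : ℕ =>
      (∫ t, t ^ (2 * (k + 1)) ∂μ) ^ (-(1 : ℝ) / (2 * (k + 1) : ℝ)))) :
    μ = ν := by
  have : IsFiniteMeasure μ := isFiniteMeasure_of_integrable_abs_pow_zero (hμint 0)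
  have : IsFiniteMeasure ν := isFiniteMeasure_of_integrable_abs_pow_zero (hνint 0)
  have hpos (n : ℕ) : 0 < absMoment (μ + ν) n :=
    absMoment_pos ((hμint n).add_measure (hνint n)) fun hzero ↦
      not_ae_eq_zero_of_not_summable_rpow_moment hCarleman (ae_add_measure_iff.1 hzero).1
  have heven (k : ℕ) :
      absMoment (μ + ν) (2 * (k + 1)) = 2 * ∫ t, t ^ (2 * (k + 1)) ∂μ := by
    rw [absMoment_add_measure (hμint _) (hνint _), absMoment_eq_of_even (even_two_mul _),
      absMoment_eq_of_even (even_two_mul _), ← hmom, ← two_mul]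
  exact ext_of_moments_of_not_summable_absMoment_div
    (fun n ↦ memLp_id_of_integrable_abs_pow (hμint n))
    (fun n ↦ memLp_id_of_integrable_abs_pow (hνint n)) hmom hpos
    (not_summable_div_of_not_summable_even_rpow two_pos hpos heven hCarleman)
end
end

section
/- (Inversion formula) Let μ be a Borel probability measure on ℝ and let F(x) = ∫_ℝ e^{iλx} dμ(λ) be its Fourier transform. Then for all real numbers a₀ < b₀, the limit as T → ∞ of (1/(2π)) ∫_{−T}^{T} ((e^{−i x a₀} − e^{−i x b₀})/(i x)) · F(x) dx exists and equals μ((a₀, b₀)) + (μ({a₀}) + μ({b₀}))/2. -/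
open MeasureTheory Complex Filter

noncomputable section

/-! Away from `x = 0` the kernel `(e^{-ixa} - e^{-ixb}) / (ix)` is `∫ t in a..b, e^{-ixt}`, so two
applications of Fubini turn its truncated integral against `charFun μ` into
`2 ∫ l, Si (T (l - a)) - Si (T (l - b)) ∂μ`, where `Si` is the sine integral. Since `Si` is bounded
and tends to `±π / 2` at `±∞`, dominated convergence gives the limit
`π ∫ l, sign (l - a) - sign (l - b) ∂μ`, in which each endpoint counts half.
The Dirichlet integral `Si ∞ = π / 2` comes from writing `sinc x = ∫ y in (0, ∞), e^{-xy} sin x` and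
integrating in `x` first, which leaves `1 / (1 + y²)` and an error bounded by `e^{-Ty}`. -/

open scoped Topology

section SineIntegral

/-- The sine integral `Si`, with the integrand `sin t / t` extended continuously to `t = 0`. -/
def sineIntegral (x : ℝ) : ℝ := ∫ t in (0 : ℝ)..x, Real.sinc t

lemma sineIntegral_zero : sineIntegral 0 = 0 := intervalIntegral.integral_same

lemma sineIntegral_neg (x : ℝ) : sineIntegral (-x) = -sineIntegral x := by
  have h := intervalIntegral.integral_comp_neg (a := 0) (b := x) Real.sinc
  simp only [Real.sinc_neg, neg_zero] at h
  rw [sineIntegral, sineIntegral, h, intervalIntegral.integral_symm]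

lemma continuous_sineIntegral : Continuous sineIntegral :=
  intervalIntegral.continuous_primitive
    (fun _ _ ↦ Real.continuous_sinc.intervalIntegrable _ _) 0

lemma integral_sinc (a b : ℝ) :
    ∫ x in a..b, Real.sinc x = sineIntegral b - sineIntegral a :=
  (intervalIntegral.integral_interval_sub_left
    (Real.continuous_sinc.intervalIntegrable _ _)
    (Real.continuous_sinc.intervalIntegrable _ _)).symm

lemma abs_sineIntegral_le_abs (x : ℝ) : |sineIntegral x| ≤ |x| := by
  simpa [sineIntegral] using intervalIntegral.norm_integral_le_of_norm_le_const
    (a := 0) (b := x) (f := Real.sinc) (fun t _ ↦ Real.abs_sinc_le_one t)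

/-- The tail `∫ x in (T, ∞), e^{-xy} sin x` of the Laplace transform of the sine, in closed form
(which agrees with that integral for `0 < y`). It is the error term in the Dirichlet integral. -/
def sineLaplaceTail (T y : ℝ) : ℝ :=
  Real.exp (-T * y) * ((Real.cos T + y * Real.sin T) / (1 + y ^ 2))

lemma hasDerivAt_sineLaplaceTail (x y : ℝ) :
    HasDerivAt (fun x ↦ sineLaplaceTail x y) (-(Real.exp (-x * y) * Real.sin x)) x := by
  have hexp : HasDerivAt (fun x ↦ Real.exp (-x * y)) (Real.exp (-x * y) * (-1 * y)) x :=
    ((hasDerivAt_neg x).mul_const y).exp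
  have htrig : HasDerivAt (fun x ↦ (Real.cos x + y * Real.sin x) / (1 + y ^ 2))
      ((-Real.sin x + y * Real.cos x) / (1 + y ^ 2)) x :=
    ((Real.hasDerivAt_cos x).add ((Real.hasDerivAt_sin x).const_mul y)).div_const _
  refine (hexp.mul htrig).congr_deriv ?_
  field_simp
  ring

lemma integral_exp_neg_mul_mul_sin (T y : ℝ) :
    ∫ x in (0 : ℝ)..T, Real.exp (-x * y) * Real.sin x =
      (1 + y ^ 2)⁻¹ - sineLaplaceTail T y := by
  have hderiv : ∀ x ∈ Set.uIcc 0 T, HasDerivAt (fun x ↦ -sineLaplaceTail x y)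
      (Real.exp (-x * y) * Real.sin x) x :=
    fun x _ ↦ (hasDerivAt_sineLaplaceTail x y).fun_neg.congr_deriv (neg_neg _)
  rw [intervalIntegral.integral_eq_sub_of_hasDerivAt hderiv
    (Continuous.intervalIntegrable (by fun_prop) _ _)]
  simp only [sineLaplaceTail, neg_zero, zero_mul, Real.exp_zero, Real.cos_zero, Real.sin_zero,
    mul_zero, add_zero, one_mul, one_div]
  ring

lemma abs_sineLaplaceTail_le (T y : ℝ) : |sineLaplaceTail T y| ≤ Real.exp (-T * y) := by
  have hpos : 0 < 1 + y ^ 2 := by positivity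
  have hsq : (Real.cos T + y * Real.sin T) ^ 2 ≤ (1 + y ^ 2) ^ 2 := by
    nlinarith [sq_nonneg (y * Real.cos T - Real.sin T), Real.sin_sq_add_cos_sq T, sq_nonneg y]
  rw [sineLaplaceTail, abs_mul, Real.abs_exp, abs_div, abs_of_pos hpos]
  exact mul_le_of_le_one_right (Real.exp_nonneg _)
    ((div_le_one hpos).2 (abs_le_of_sq_le_sq hsq hpos.le))

lemma integrableOn_sineLaplaceTail {T : ℝ} (hT : 0 < T) :
    IntegrableOn (sineLaplaceTail T) (Set.Ioi 0) := by
  refine (integrableOn_exp_mul_Ioi (neg_lt_zero.2 hT) 0).mono' ?_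
    (ae_of_all _ (abs_sineLaplaceTail_le T))
  unfold sineLaplaceTail
  exact Measurable.aestronglyMeasurable (by fun_prop)

lemma integral_exp_neg_mul_Ioi_zero {x : ℝ} (hx : 0 < x) :
    ∫ y in Set.Ioi (0 : ℝ), Real.exp (-x * y) = x⁻¹ := by
  rw [integral_exp_mul_Ioi (neg_lt_zero.2 hx), mul_zero, Real.exp_zero, neg_div_neg_eq, one_div]

lemma integral_exp_neg_mul_mul_sin_Ioi {x : ℝ} (hx : 0 < x) :
    ∫ y in Set.Ioi (0 : ℝ), Real.exp (-x * y) * Real.sin x = Real.sinc x := by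
  rw [integral_mul_const, integral_exp_neg_mul_Ioi_zero hx, Real.sinc_of_ne_zero hx.ne',
    inv_mul_eq_div]

lemma integrable_exp_neg_mul_mul_sin (T : ℝ) :
    Integrable (Function.uncurry fun x y : ℝ ↦ Real.exp (-x * y) * Real.sin x)
      ((volume.restrict (Set.Ioc 0 T)).prod (volume.restrict (Set.Ioi 0))) := by
  rw [integrable_prod_iff (Continuous.aestronglyMeasurable (by fun_prop))]
  constructor
  · filter_upwards [ae_restrict_mem measurableSet_Ioc] with x hx
    exact (integrableOn_exp_mul_Ioi (neg_lt_zero.2 hx.1) 0).mul_const (Real.sin x)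
  · have hsinc : IntegrableOn (fun x ↦ |Real.sinc x|) (Set.Ioc 0 T) :=
      (Continuous.integrableOn_Icc (by fun_prop)).mono_set Set.Ioc_subset_Icc_self
    refine hsinc.congr ?_
    filter_upwards [ae_restrict_mem measurableSet_Ioc] with x hx
    simp only [Function.uncurry, norm_mul, Real.norm_eq_abs, Real.abs_exp]
    rw [integral_mul_const, integral_exp_neg_mul_Ioi_zero hx.1, Real.sinc_of_ne_zero hx.1.ne',
      abs_div, abs_of_pos hx.1, inv_mul_eq_div]

lemma sineIntegral_eq_pi_div_two_sub {T : ℝ} (hT : 0 < T) :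
    sineIntegral T = Real.pi / 2 - ∫ y in Set.Ioi (0 : ℝ), sineLaplaceTail T y :=
  calc sineIntegral T
    _ = ∫ x in Set.Ioc 0 T, ∫ y in Set.Ioi (0 : ℝ), Real.exp (-x * y) * Real.sin x := by
      rw [sineIntegral, intervalIntegral.integral_of_le hT.le]
      exact setIntegral_congr_fun measurableSet_Ioc
        fun x hx ↦ (integral_exp_neg_mul_mul_sin_Ioi hx.1).symm
    _ = ∫ y in Set.Ioi (0 : ℝ), ∫ x in (0 : ℝ)..T, Real.exp (-x * y) * Real.sin x := by
      simp_rw [intervalIntegral.integral_of_le hT.le]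
      exact integral_integral_swap (integrable_exp_neg_mul_mul_sin T)
    _ = ∫ y in Set.Ioi (0 : ℝ), ((1 + y ^ 2)⁻¹ - sineLaplaceTail T y) := by
      simp_rw [integral_exp_neg_mul_mul_sin]
    _ = Real.pi / 2 - ∫ y in Set.Ioi (0 : ℝ), sineLaplaceTail T y := by
      rw [integral_sub integrable_inv_one_add_sq.integrableOn (integrableOn_sineLaplaceTail hT),
        integral_Ioi_inv_one_add_sq, Real.arctan_zero, sub_zero]

lemma abs_sineIntegral_sub_pi_div_two_le {T : ℝ} (hT : 0 < T) :
    |sineIntegral T - Real.pi / 2| ≤ T⁻¹ := by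
  rw [sineIntegral_eq_pi_div_two_sub hT, sub_sub_cancel_left, abs_neg,
    ← integral_exp_neg_mul_Ioi_zero hT]
  exact norm_integral_le_of_norm_le (f := sineLaplaceTail T)
    (integrableOn_exp_mul_Ioi (neg_lt_zero.2 hT) 0) (ae_of_all _ (abs_sineLaplaceTail_le T))

lemma tendsto_sineIntegral_atTop : Tendsto sineIntegral atTop (𝓝 (Real.pi / 2)) := by
  rw [tendsto_iff_norm_sub_tendsto_zero]
  refine squeeze_zero' (Eventually.of_forall fun _ ↦ norm_nonneg _) ?_ tendsto_inv_atTop_zero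
  filter_upwards [eventually_gt_atTop 0] with T hT using abs_sineIntegral_sub_pi_div_two_le hT

lemma abs_sineIntegral_le (x : ℝ) : |sineIntegral x| ≤ Real.pi / 2 + 1 := by
  wlog hx : 0 ≤ x generalizing x
  · simpa [sineIntegral_neg] using this (-x) (by linarith)
  rcases le_total x 1 with hx1 | hx1
  · have := abs_sineIntegral_le_abs x
    rw [abs_of_nonneg hx] at this
    linarith [Real.pi_pos]
  · have hdist := abs_sineIntegral_sub_pi_div_two_le (zero_lt_one.trans_le hx1)
    have htri := abs_sub_abs_le_abs_sub (sineIntegral x) (Real.pi / 2)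
    rw [abs_of_pos Real.pi_div_two_pos] at htri
    linarith [inv_le_one_of_one_le₀ hx1]

lemma tendsto_sineIntegral_mul_atTop (c : ℝ) :
    Tendsto (fun T ↦ sineIntegral (T * c)) atTop (𝓝 (Real.pi / 2 * Real.sign c)) := by
  rcases lt_trichotomy c 0 with hc | rfl | hc
  · have h := tendsto_sineIntegral_atTop.comp (tendsto_id.atTop_mul_const (neg_pos.2 hc))
    simpa [Function.comp_def, sineIntegral_neg, Real.sign_of_neg hc] using h.neg
  · simp [sineIntegral_zero]
  · simpa [Function.comp_def, Real.sign_of_pos hc] using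
      tendsto_sineIntegral_atTop.comp (tendsto_id.atTop_mul_const hc)

lemma mul_integral_sinc_mul_sub (T l a b : ℝ) :
    T * ∫ t in a..b, Real.sinc (T * (l - t)) =
      sineIntegral (T * (l - a)) - sineIntegral (T * (l - b)) := by
  simp_rw [mul_sub]
  rw [intervalIntegral.mul_integral_comp_sub_mul, integral_sinc]

variable (μ : Measure ℝ) [IsFiniteMeasure μ]

lemma integrable_sineIntegral_mul_sub (T a : ℝ) :
    Integrable (fun l ↦ sineIntegral (T * (l - a))) μ :=
  .of_bound (continuous_sineIntegral.comp (by fun_prop)).aestronglyMeasurable _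
    (ae_of_all _ fun _ ↦ abs_sineIntegral_le _)

lemma tendsto_integral_sineIntegral_mul_sub (a : ℝ) :
    Tendsto (fun T ↦ ∫ l, sineIntegral (T * (l - a)) ∂μ) atTop
      (𝓝 (Real.pi / 2 * ∫ l, Real.sign (l - a) ∂μ)) := by
  rw [← integral_const_mul]
  exact tendsto_integral_filter_of_dominated_convergence (fun _ ↦ Real.pi / 2 + 1)
    (Eventually.of_forall fun T ↦ (integrable_sineIntegral_mul_sub μ T a).aestronglyMeasurable)
    (Eventually.of_forall fun _ ↦ ae_of_all _ fun _ ↦ abs_sineIntegral_le _)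
    (integrable_const _) (ae_of_all _ fun l ↦ tendsto_sineIntegral_mul_atTop (l - a))

end SineIntegral

section Sign

lemma sign_sub_sub_sign_sub {a b : ℝ} (hab : a < b) (l : ℝ) :
    Real.sign (l - a) - Real.sign (l - b) = 2 * (Set.Ioo a b).indicator 1 l +
      (({a} : Set ℝ).indicator 1 l + ({b} : Set ℝ).indicator 1 l) := by
  simp only [Set.indicator_apply, Set.mem_Ioo, Set.mem_singleton_iff, Pi.one_apply, Real.sign]
  split_ifs <;> grind

lemma measurable_sign : Measurable Real.sign :=
  measurable_const.ite measurableSet_Iio (measurable_const.ite measurableSet_Ioi measurable_const)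

lemma abs_sign_le_one (x : ℝ) : |Real.sign x| ≤ 1 := by
  rcases Real.sign_apply_eq x with h | h | h <;> simp [h]

lemma integrable_sign_sub (μ : Measure ℝ) [IsFiniteMeasure μ] (a : ℝ) :
    Integrable (fun l ↦ Real.sign (l - a)) μ :=
  .of_bound (measurable_sign.comp (by fun_prop)).aestronglyMeasurable 1
    (ae_of_all _ fun _ ↦ abs_sign_le_one _)

lemma integral_sign_sub_sub_integral_sign_sub (μ : Measure ℝ) [IsFiniteMeasure μ] {a b : ℝ}
    (hab : a < b) :
    (∫ l, Real.sign (l - a) ∂μ) - ∫ l, Real.sign (l - b) ∂μ =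
      2 * μ.real (Set.Ioo a b) + (μ.real {a} + μ.real {b}) := by
  have hindicator : ∀ {s : Set ℝ}, MeasurableSet s → Integrable (s.indicator (1 : ℝ → ℝ)) μ :=
    fun hs ↦ (integrable_const 1).indicator hs
  have ha := hindicator (measurableSet_singleton a)
  have hb := hindicator (measurableSet_singleton b)
  rw [← integral_sub (integrable_sign_sub μ a) (integrable_sign_sub μ b)]
  simp_rw [sign_sub_sub_sign_sub hab]
  rw [integral_add ((hindicator measurableSet_Ioo).const_mul 2) (ha.fun_add hb), integral_const_mul,
    integral_add ha hb, integral_indicator_one measurableSet_Ioo,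
    integral_indicator_one (measurableSet_singleton a),
    integral_indicator_one (measurableSet_singleton b)]

end Sign

section Fubini

variable {E : Type*} [NormedAddCommGroup E] [NormedSpace ℝ E]

lemma intervalIntegral_intervalIntegral_swap_of_continuous {f : ℝ → ℝ → E}
    (hf : Continuous f.uncurry) (a b c d : ℝ) :
    ∫ x in a..b, ∫ y in c..d, f x y = ∫ y in c..d, ∫ x in a..b, f x y :=
  intervalIntegral_intervalIntegral_swap <|
    (hf.continuousOn.integrableOn_compact (isCompact_uIcc.prod isCompact_uIcc)).mono_set <|
      Set.prod_mono Set.uIoc_subset_uIcc Set.uIoc_subset_uIcc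

lemma intervalIntegral_integral_swap_of_bound {α : Type*} [MeasurableSpace α] {ν : Measure α}
    [IsFiniteMeasure ν] {f : ℝ → α → E} (hf : StronglyMeasurable f.uncurry) {C : ℝ}
    (hC : ∀ x y, ‖f x y‖ ≤ C) (a b : ℝ) :
    ∫ x in a..b, ∫ y, f x y ∂ν = ∫ y, (∫ x in a..b, f x y) ∂ν := by
  have : IsFiniteMeasure (volume.restrict (Set.uIoc a b)) := by unfold Set.uIoc; infer_instance
  exact intervalIntegral_integral_swap <|
    .of_bound hf.aestronglyMeasurable C (ae_of_all _ fun p ↦ hC p.1 p.2)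

end Fubini

section Inversion

lemma exp_sub_exp_div_eq_integral {x : ℝ} (hx : x ≠ 0) (a b : ℝ) :
    (exp (-I * x * a) - exp (-I * x * b)) / (I * x) = ∫ t in a..b, exp (-I * x * t) := by
  have hne : -I * (x : ℂ) ≠ 0 := by simp [hx]
  rw [integral_exp_mul_complex hne, ← neg_div_neg_eq, neg_sub, neg_mul]

variable (μ : Measure ℝ) [IsFiniteMeasure μ]

lemma integral_exp_mul_charFun {T : ℝ} (hT : 0 < T) (t : ℝ) :
    ∫ x in (-T)..T, exp (-I * x * t) * charFun μ x =
      ((2 * T * ∫ l, Real.sinc (T * (l - t)) ∂μ : ℝ) : ℂ) := by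
  have htranslate : ∀ x : ℝ,
      exp (-I * x * t) * charFun μ x = charFun (μ.map (· + -t)) x := fun x ↦ by
    rw [charFun_map_add_const, mul_comm]
    congr 2
    simp only [RCLike.inner_apply, Real.ringHom_apply, ofReal_mul, ofReal_neg]
    ring
  simp_rw [htranslate, integral_charFun_Icc hT]
  rw [integral_map (by fun_prop) (by fun_prop)]
  push_cast
  simp_rw [sub_eq_add_neg]

lemma integral_exp_sub_exp_div_mul_charFun {T : ℝ} (hT : 0 < T) (a b : ℝ) :
    ∫ x in (-T)..T, (exp (-I * x * a) - exp (-I * x * b)) / (I * x) * charFun μ x =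
      ((2 * ((∫ l, sineIntegral (T * (l - a)) ∂μ) -
        ∫ l, sineIntegral (T * (l - b)) ∂μ) : ℝ) : ℂ) := by
  calc ∫ x in (-T)..T, (exp (-I * x * a) - exp (-I * x * b)) / (I * x) * charFun μ x
    _ = ∫ x in (-T)..T, (∫ t in a..b, exp (-I * x * t)) * charFun μ x := by
      refine intervalIntegral.integral_congr_ae ?_
      filter_upwards [Measure.ae_ne volume (0 : ℝ)] with x hx _
      rw [exp_sub_exp_div_eq_integral hx]
    _ = ∫ t in a..b, ((2 * T * ∫ l, Real.sinc (T * (l - t)) ∂μ : ℝ) : ℂ) := by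
      simp_rw [← intervalIntegral.integral_mul_const, ← integral_exp_mul_charFun μ hT]
      exact intervalIntegral_intervalIntegral_swap_of_continuous (by fun_prop) _ _ _ _
    _ = ((2 * ∫ l, T * (∫ t in a..b, Real.sinc (T * (l - t))) ∂μ : ℝ) : ℂ) := by
      rw [intervalIntegral.integral_ofReal, intervalIntegral.integral_const_mul,
        intervalIntegral_integral_swap_of_bound (Continuous.stronglyMeasurable (by fun_prop))
          (fun _ _ ↦ Real.abs_sinc_le_one _), integral_const_mul, mul_assoc]
    _ = _ := by
      simp_rw [mul_integral_sinc_mul_sub]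
      rw [integral_sub (integrable_sineIntegral_mul_sub μ T a)
        (integrable_sineIntegral_mul_sub μ T b)]

theorem stmt_10_general {a b : ℝ} (hab : a < b) :
    Tendsto
      (fun T : ℝ ↦ 1 / (2 * (Real.pi : ℂ)) * ∫ x in (-T)..T,
        (exp (-I * x * a) - exp (-I * x * b)) / (I * x) * charFun μ x)
      atTop
      (𝓝 ((μ.real (Set.Ioo a b) + (μ.real {a} + μ.real {b}) / 2 : ℝ) : ℂ)) := by
  have hlim := (((tendsto_integral_sineIntegral_mul_sub μ a).sub
    (tendsto_integral_sineIntegral_mul_sub μ b)).const_mul 2).const_mul (1 / (2 * Real.pi))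
  have hvalue : 1 / (2 * Real.pi) * (2 * (Real.pi / 2 * (∫ l, Real.sign (l - a) ∂μ) -
      Real.pi / 2 * ∫ l, Real.sign (l - b) ∂μ)) =
      μ.real (Set.Ioo a b) + (μ.real {a} + μ.real {b}) / 2 := by
    rw [← mul_sub, integral_sign_sub_sub_integral_sign_sub μ hab]
    field_simp
  rw [hvalue] at hlim
  refine hlim.ofReal.congr' ?_
  filter_upwards [eventually_gt_atTop 0] with T hT
  rw [integral_exp_sub_exp_div_mul_charFun μ hT]
  push_cast
  rfl

end Inversion

theorem stmt_10 (μ : Measure ℝ) [IsProbabilityMeasure μ] (F : ℝ → ℂ)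
    (hF : ∀ x : ℝ, F x = ∫ l, Complex.exp (Complex.I * (l : ℂ) * (x : ℂ)) ∂μ)
    (a₀ b₀ : ℝ) (hab : a₀ < b₀) :
    Tendsto
      (fun T : ℝ => (1 / (2 * (Real.pi : ℂ))) *
        ∫ x in (-T)..T,
          ((Complex.exp (-Complex.I * (x : ℂ) * (a₀ : ℂ)) -
              Complex.exp (-Complex.I * (x : ℂ) * (b₀ : ℂ))) / (Complex.I * (x : ℂ))) * F x)
      atTop
      (nhds ((((μ (Set.Ioo a₀ b₀)).toReal +
        ((μ {a₀}).toReal + (μ {b₀}).toReal) / 2 : ℝ) : ℂ))) := by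
  obtain rfl : F = charFun μ := funext fun x ↦ by
    simp_rw [hF, charFun_apply_real, mul_comm I, mul_comm (x : ℂ), mul_right_comm _ I]
  exact stmt_10_general μ hab
end
end

section
/- (Green's function identities) (1) For every smooth compactly supported φ : ℝ → ℂ with support contained in (0, 1/2), the function u(x) = ∫_0^{1/2} φ(y)·(1 − |x − y|) dy is twice differentiable at every x ∈ (0, 1/2), and u''(x) = −2 φ(x) there. (2) For every smooth compactly supported φ : ℝ → ℂ with support contained in (0, 1), the function u(x) = ∫_0^1 e^{−|x−y|} φ(y) dy is twice differentiable at every x ∈ (0, 1), and u(x) − u''(x) = 2 φ(x) there. -/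
open MeasureTheory Complex

noncomputable section

/-!
On either side of the diagonal the kernel `g |t - y|` is a smooth function of `t - y`, so for
`a < t < b` the potential `u t = ∫ y in a..b, g |t - y| • φ y` is the difference of the integrals
`∫ y in a..t, g (t - y) • φ y` and `∫ y in b..t, g (-(t - y)) • φ y`, both with the variable upper
limit `t`. In the Leibniz rule the boundary terms `g 0 • φ t` cancel at the first differentiation,
while at the second one the odd reflection of `g'` makes them add up, so that
`u'' = 2 g'(0) φ + ∫ g''|t - y| φ`. The kernels `1 - s` and `exp (-s)` have `g' 0 = -1` and
`g'' = 0`, respectively `g'' = g`.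
-/

theorem hasDerivAt_comp_neg {𝕜 E : Type*} [NontriviallyNormedField 𝕜] [NormedAddCommGroup E]
    [NormedSpace 𝕜 E] {g : 𝕜 → E} {g' : E} {s : 𝕜} (hg : HasDerivAt g g' (-s)) :
    HasDerivAt (fun r => g (-r)) (-g') s :=
  (hg.scomp s (hasDerivAt_neg s)).congr_deriv (neg_one_smul 𝕜 g')

section LeibnizRule

variable {E : Type*} [NormedAddCommGroup E] [NormedSpace ℝ E] {F F' : ℝ → ℝ → E}

theorem hasDerivAt_intervalIntegral_of_continuous_deriv (hF : ∀ t, Continuous (F t))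
    (hF' : Continuous ↿F') (hderiv : ∀ t y, HasDerivAt (F · y) (F' t y) t) (a b x : ℝ) :
    HasDerivAt (fun t => ∫ y in a..b, F t y) (∫ y in a..b, F' x y) x := by
  obtain ⟨C, hC⟩ := ((isCompact_closedBall x 1).prod isCompact_uIcc).exists_bound_of_continuousOn
    (hF'.continuousOn (s := Metric.closedBall x 1 ×ˢ Set.uIcc a b))
  exact (intervalIntegral.hasDerivAt_integral_of_dominated_loc_of_deriv_le
    (Metric.closedBall_mem_nhds x one_pos) (.of_forall fun t => (hF t).aestronglyMeasurable)
    ((hF x).intervalIntegrable a b)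
    (hF'.comp (Continuous.prodMk_right x)).aestronglyMeasurable
    (.of_forall fun y hy t ht => hC (t, y) ⟨ht, Set.uIoc_subset_uIcc hy⟩)
    intervalIntegrable_const (.of_forall fun y _ t _ => hderiv t y)).2

variable [CompleteSpace E]

theorem hasDerivAt_intervalIntegral_variable_upper (hF : Continuous ↿F) (hF' : Continuous ↿F')
    (hderiv : ∀ t y, HasDerivAt (F · y) (F' t y) t) (c x : ℝ) :
    HasDerivAt (fun t => ∫ y in c..t, F t y) (F x x + ∫ y in c..x, F' x y) x := by
  have hF_right (t : ℝ) : Continuous (F t) := hF.comp (Continuous.prodMk_right t)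
  have hspan : Continuous (ContinuousLinearMap.toSpanSingleton ℝ : E → ℝ →L[ℝ] E) :=
    ContinuousLinearMap.toSpanSingletonCLE.continuous
  have hpartial : HasStrictFDerivAt (↿fun t s => ∫ y in c..s, F t y)
      ((ContinuousLinearMap.toSpanSingleton ℝ (∫ y in c..x, F' x y)).coprod
        (ContinuousLinearMap.toSpanSingleton ℝ (F x x))) (x, x) := by
    apply hasStrictFDerivAt_uncurry_coprod (u := (x, x))
      (f₁ := fun t s => ContinuousLinearMap.toSpanSingleton ℝ (∫ y in c..s, F' t y))
      (f₂ := fun t s => ContinuousLinearMap.toSpanSingleton ℝ (F t s))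
    · exact .of_forall fun v =>
        hasDerivAt_intervalIntegral_of_continuous_deriv hF_right hF' hderiv c v.2 v.1
    · exact .of_forall fun v => ((hF_right v.1).integral_hasStrictDerivAt c v.2).hasDerivAt
    · exact (hspan.comp
        (intervalIntegral.continuous_parametric_primitive_of_continuous hF')).continuousAt
    · exact (hspan.comp hF).continuousAt
  have hdiag : HasDerivAt (fun t : ℝ => (t, t)) (1, 1) x :=
    (hasDerivAt_id x).prodMk (hasDerivAt_id x)
  exact (hpartial.hasFDerivAt.comp_hasDerivAt_of_eq x hdiag rfl).congr_deriv (by simp [add_comm])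

theorem hasDerivAt_intervalIntegral_comp_sub_smul {h h' : ℝ → ℝ} {φ : ℝ → E}
    (hh : ∀ s, HasDerivAt h (h' s) s) (hh' : Continuous h') (hφ : Continuous φ) (c x : ℝ) :
    HasDerivAt (fun t => ∫ y in c..t, h (t - y) • φ y)
      (h 0 • φ x + ∫ y in c..x, h' (x - y) • φ y) x := by
  have h_cont : Continuous h := continuous_iff_continuousAt.2 fun s => (hh s).continuousAt
  have hderiv (t y : ℝ) : HasDerivAt (fun t => h (t - y) • φ y) (h' (t - y) • φ y) t :=
    ((hh (t - y)).comp_sub_const t y).smul_const (φ y)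
  simpa only [sub_self] using hasDerivAt_intervalIntegral_variable_upper
    (F := fun t y => h (t - y) • φ y) (F' := fun t y => h' (t - y) • φ y)
    (by fun_prop) (by fun_prop) hderiv c x

end LeibnizRule

section GreenIdentity

variable {E : Type*} [NormedAddCommGroup E] [NormedSpace ℝ E] {φ : ℝ → E} {a b x : ℝ}

theorem setIntegral_Ioo_comp_abs_sub_smul {g : ℝ → ℝ} (hg : Continuous g) (hφ : Continuous φ)
    (hx : x ∈ Set.Icc a b) :
    ∫ y in Set.Ioo a b, g |x - y| • φ y =
      (∫ y in a..x, g (x - y) • φ y) - ∫ y in b..x, g (-(x - y)) • φ y := by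
  have hint (c d : ℝ) : IntervalIntegrable (fun y => g |x - y| • φ y) volume c d :=
    Continuous.intervalIntegrable (by fun_prop) c d
  have hleft : ∫ y in a..x, g |x - y| • φ y = ∫ y in a..x, g (x - y) • φ y := by
    refine intervalIntegral.integral_congr fun y hy => ?_
    rw [Set.uIcc_of_le hx.1] at hy
    simp only [abs_of_nonneg (sub_nonneg.2 hy.2)]
  have hright : ∫ y in b..x, g |x - y| • φ y = ∫ y in b..x, g (-(x - y)) • φ y := by
    refine intervalIntegral.integral_congr fun y hy => ?_
    rw [Set.uIcc_of_ge hx.2] at hy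
    simp only [abs_of_nonpos (sub_nonpos.2 hy.1)]
  rw [← integral_Ioc_eq_integral_Ioo, ← intervalIntegral.integral_of_le (hx.1.trans hx.2),
    ← hleft, ← hright, eq_sub_iff_add_eq,
    intervalIntegral.integral_add_adjacent_intervals (hint _ _) (hint _ _)]

variable [CompleteSpace E] {g g' g'' : ℝ → ℝ}

theorem hasDerivAt_setIntegral_comp_abs_sub_smul (hg : ∀ s, HasDerivAt g (g' s) s)
    (hg' : Continuous g') (hφ : Continuous φ) (hx : x ∈ Set.Ioo a b) :
    HasDerivAt (fun t => ∫ y in Set.Ioo a b, g |t - y| • φ y)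
      ((∫ y in a..x, g' (x - y) • φ y) + ∫ y in b..x, g' (-(x - y)) • φ y) x := by
  have hg_cont : Continuous g := continuous_iff_continuousAt.2 fun s => (hg s).continuousAt
  have hg_neg (s : ℝ) : HasDerivAt (fun r => g (-r)) (-g' (-s)) s := hasDerivAt_comp_neg (hg (-s))
  have hsplit : (fun t => ∫ y in Set.Ioo a b, g |t - y| • φ y) =ᶠ[nhds x] fun t =>
      (∫ y in a..t, g (t - y) • φ y) - ∫ y in b..t, g (-(t - y)) • φ y := by
    filter_upwards [Icc_mem_nhds hx.1 hx.2] with t ht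
    exact setIntegral_Ioo_comp_abs_sub_smul hg_cont hφ ht
  have hleft := hasDerivAt_intervalIntegral_comp_sub_smul hg hg' hφ a x
  have hright := hasDerivAt_intervalIntegral_comp_sub_smul hg_neg (by fun_prop) hφ b x
  refine ((hleft.sub hright).congr_of_eventuallyEq hsplit).congr_deriv ?_
  simp only [neg_zero, neg_smul, intervalIntegral.integral_neg]
  abel

theorem hasDerivAt_deriv_setIntegral_comp_abs_sub_smul (hg : ∀ s, HasDerivAt g (g' s) s)
    (hg' : ∀ s, HasDerivAt g' (g'' s) s) (hg'' : Continuous g'') (hφ : Continuous φ)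
    (hx : x ∈ Set.Ioo a b) :
    HasDerivAt (deriv fun t => ∫ y in Set.Ioo a b, g |t - y| • φ y)
      ((2 * g' 0) • φ x + ∫ y in Set.Ioo a b, g'' |x - y| • φ y) x := by
  have hg'_cont : Continuous g' := continuous_iff_continuousAt.2 fun s => (hg' s).continuousAt
  have hg'_neg (s : ℝ) : HasDerivAt (fun r => g' (-r)) (-g'' (-s)) s :=
    hasDerivAt_comp_neg (hg' (-s))
  have hfirst : (deriv fun t => ∫ y in Set.Ioo a b, g |t - y| • φ y) =ᶠ[nhds x] fun t =>
      (∫ y in a..t, g' (t - y) • φ y) + ∫ y in b..t, g' (-(t - y)) • φ y := by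
    filter_upwards [Ioo_mem_nhds hx.1 hx.2] with t ht
    exact (hasDerivAt_setIntegral_comp_abs_sub_smul hg hg'_cont hφ ht).deriv
  have hleft := hasDerivAt_intervalIntegral_comp_sub_smul hg' hg'' hφ a x
  have hright := hasDerivAt_intervalIntegral_comp_sub_smul hg'_neg (by fun_prop) hφ b x
  refine ((hleft.add hright).congr_of_eventuallyEq hfirst).congr_deriv ?_
  rw [setIntegral_Ioo_comp_abs_sub_smul hg'' hφ (Set.Ioo_subset_Icc_self hx)]
  simp only [neg_zero, neg_smul, intervalIntegral.integral_neg, two_mul, add_smul]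
  abel

theorem stmt_11_general (hφ : Continuous φ) (hx : x ∈ Set.Ioo a b) :
    (DifferentiableAt ℝ (fun t => ∫ y in Set.Ioo a b, (1 - |t - y|) • φ y) x ∧
      HasDerivAt (deriv fun t => ∫ y in Set.Ioo a b, (1 - |t - y|) • φ y)
        ((-2 : ℝ) • φ x) x) ∧
    (DifferentiableAt ℝ (fun t => ∫ y in Set.Ioo a b, Real.exp (-|t - y|) • φ y) x ∧
      HasDerivAt (deriv fun t => ∫ y in Set.Ioo a b, Real.exp (-|t - y|) • φ y)
        ((∫ y in Set.Ioo a b, Real.exp (-|x - y|) • φ y) - (2 : ℝ) • φ x) x) := by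
  have hlin (s : ℝ) : HasDerivAt (fun s : ℝ => 1 - s) (-1) s := (hasDerivAt_id s).const_sub 1
  have hexp (s : ℝ) : HasDerivAt (fun s => Real.exp (-s)) (-Real.exp (-s)) s :=
    hasDerivAt_comp_neg (Real.hasDerivAt_exp (-s))
  have hexp' (s : ℝ) : HasDerivAt (fun s => -Real.exp (-s)) (Real.exp (-s)) s :=
    (hexp s).fun_neg.congr_deriv (neg_neg _)
  refine ⟨⟨?_, ?_⟩, ?_, ?_⟩
  · exact (hasDerivAt_setIntegral_comp_abs_sub_smul hlin continuous_const hφ hx).differentiableAt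
  · exact (hasDerivAt_deriv_setIntegral_comp_abs_sub_smul hlin (fun s => hasDerivAt_const s _)
      continuous_const hφ hx).congr_deriv (by simp)
  · exact (hasDerivAt_setIntegral_comp_abs_sub_smul hexp (by fun_prop) hφ hx).differentiableAt
  · refine (hasDerivAt_deriv_setIntegral_comp_abs_sub_smul hexp hexp' (by fun_prop)
      hφ hx).congr_deriv ?_
    simp [sub_eq_neg_add]

end GreenIdentity

theorem stmt_11 :
    (∀ φ : ℝ → ℂ, ContDiff ℝ (⊤ : ℕ∞) φ → HasCompactSupport φ →
      tsupport φ ⊆ Set.Ioo (0 : ℝ) (1 / 2) →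
      ∀ x ∈ Set.Ioo (0 : ℝ) (1 / 2),
        DifferentiableAt ℝ
          (fun t : ℝ => ∫ y in Set.Ioo (0 : ℝ) (1 / 2), φ y * ((1 - |t - y| : ℝ) : ℂ)) x ∧
        HasDerivAt
          (deriv fun t : ℝ => ∫ y in Set.Ioo (0 : ℝ) (1 / 2), φ y * ((1 - |t - y| : ℝ) : ℂ))
          (-2 * φ x) x) ∧
    (∀ φ : ℝ → ℂ, ContDiff ℝ (⊤ : ℕ∞) φ → HasCompactSupport φ →
      tsupport φ ⊆ Set.Ioo (0 : ℝ) 1 →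
      ∀ x ∈ Set.Ioo (0 : ℝ) 1,
        DifferentiableAt ℝ
          (fun t : ℝ => ∫ y in Set.Ioo (0 : ℝ) 1, ((Real.exp (-|t - y|) : ℝ) : ℂ) * φ y) x ∧
        HasDerivAt
          (deriv fun t : ℝ => ∫ y in Set.Ioo (0 : ℝ) 1, ((Real.exp (-|t - y|) : ℝ) : ℂ) * φ y)
          ((∫ y in Set.Ioo (0 : ℝ) 1, ((Real.exp (-|x - y|) : ℝ) : ℂ) * φ y) - 2 * φ x) x) := by
  refine ⟨fun φ hφ _ _ x hx => ?_, fun φ hφ _ _ x hx => ?_⟩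
  · simpa [mul_comm] using (stmt_11_general hφ.continuous hx).1
  · simpa using (stmt_11_general hφ.continuous hx).2
end
end

section
/- For all x, y ∈ (0, 1/2), the series ∑_{n=1}^∞ (4 / ((2n−1)π)²) · sin((2n−1)π x) · sin((2n−1)π y) converges with sum min(x, y); consequently, for all x, y ∈ (0, 1/2), 1 − |x − y| = 1 − x − y + 2 ∑_{n=1}^∞ (4 / ((2n−1)π)²) · sin((2n−1)π x) · sin((2n−1)π y). -/
noncomputable section

/-!
The product formula `2 sin a sin b = cos (a - b) - cos (a + b)` turns the sine series into a
difference of two values of the cosine series `∑ cos ((2n+1)πt) / (2n+1)²`. The latter is the odd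
part of the Fourier series of the Bernoulli polynomial `B₂` at `t / 2`; subtracting its even part,
which is a quarter of the same series at `t`, cancels the quadratic terms and leaves the triangle
wave `π² / 8 * (1 - 2|t|)`. The difference of the triangle waves at `x - y` and `x + y` is
proportional to `|x + y| - |x - y|`, which is `2 min x y` when `0 ≤ x + y`.
-/

section

open Real Set
open scoped Nat

theorem hasSum_odd_of_hasSum_even {G : Type*} [AddCommGroup G] [TopologicalSpace G]
    [IsTopologicalAddGroup G] {f : ℕ → G} {a b : G} (hf : HasSum f a)
    (heven : HasSum (fun n ↦ f (2 * n)) b) : HasSum (fun n ↦ f (2 * n + 1)) (a - b) := by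
  have inj_even : Function.Injective (fun n : ℕ ↦ 2 * n) := mul_right_injective₀ two_ne_zero
  have inj_odd : Function.Injective (fun n : ℕ ↦ 2 * n + 1) := (add_left_injective 1).comp inj_even
  have range_odd : range (fun n : ℕ ↦ 2 * n + 1) = (range fun n : ℕ ↦ 2 * n)ᶜ := by
    simpa using Nat.isCompl_even_odd.symm.eq_compl
  refine inj_odd.hasSum_range_iff.1 ?_
  rw [range_odd]
  exact (inj_even.hasSum_range_iff.2 heven).hasSum_compl_iff.2 (by rwa [add_sub_cancel])

theorem hasSum_one_div_odd_pow_mul_cos {k : ℕ} (hk : k ≠ 0) {t : ℝ} (ht : t ∈ Icc 0 1) :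
    HasSum (fun n : ℕ ↦ 1 / (2 * (n : ℝ) + 1) ^ (2 * k) * cos ((2 * (n : ℝ) + 1) * π * t))
      ((-1) ^ (k + 1) * (2 * π) ^ (2 * k) / 2 / (2 * k)! *
        (bernoulliFun (2 * k) (t / 2) - bernoulliFun (2 * k) t / 2 ^ (2 * k))) := by
  have half_mem : t / 2 ∈ Icc (0 : ℝ) 1 := ⟨by linarith [ht.1], by linarith [ht.2]⟩
  have hall := hasSum_one_div_nat_pow_mul_cos hk half_mem
  have even_terms (n : ℕ) : 1 / ((2 * n : ℕ) : ℝ) ^ (2 * k) * cos (2 * π * (2 * n : ℕ) * (t / 2)) =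
      1 / (n : ℝ) ^ (2 * k) * cos (2 * π * n * t) / 2 ^ (2 * k) := by
    rw [Nat.cast_mul, Nat.cast_two, mul_pow,
      show 2 * π * (2 * n) * (t / 2) = 2 * π * n * t by ring]
    ring
  have heven := (hasSum_one_div_nat_pow_mul_cos hk ht).div_const (2 ^ (2 * k))
  simp only [← even_terms] at heven
  convert! hasSum_odd_of_hasSum_even hall heven using 1
  · ext n
    push_cast
    congr 2
    ring
  · rw [bernoulliFun, bernoulliFun]
    ring

theorem hasSum_one_div_odd_sq_mul_cos {t : ℝ} (ht : |t| ≤ 1) :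
    HasSum (fun n : ℕ ↦ 1 / (2 * (n : ℝ) + 1) ^ 2 * cos ((2 * (n : ℝ) + 1) * π * t))
      (π ^ 2 / 8 * (1 - 2 * |t|)) := by
  have cos_mul_abs (c : ℝ) : cos (c * |t|) = cos (c * t) := by
    rw [← cos_abs, abs_mul, abs_abs, ← abs_mul, cos_abs]
  have h := hasSum_one_div_odd_pow_mul_cos one_ne_zero ⟨abs_nonneg t, ht⟩
  simp only [cos_mul_abs, mul_one, bernoulliFun_two] at h
  convert! h using 1
  rw [Nat.factorial_two]
  push_cast
  ring

theorem hasSum_sin_odd_mul_sin_odd {x y : ℝ} (hsub : |x - y| ≤ 1) (hadd : |x + y| ≤ 1) :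
    HasSum
      (fun n : ℕ ↦ 4 / ((2 * (n : ℝ) + 1) * π) ^ 2 *
        sin ((2 * (n : ℝ) + 1) * π * x) * sin ((2 * (n : ℝ) + 1) * π * y))
      ((|x + y| - |x - y|) / 2) := by
  have h := ((hasSum_one_div_odd_sq_mul_cos hsub).sub
    (hasSum_one_div_odd_sq_mul_cos hadd)).mul_left (2 / π ^ 2)
  convert! h using 1
  · ext n
    rw [← mul_sub, mul_sub _ x y, mul_add _ x y, ← two_mul_sin_mul_sin]
    field_simp
    ring
  · field_simp
    ring

end

theorem stmt_13_general {x y : ℝ} (hsub : |x - y| ≤ 1) (hadd : x + y ∈ Set.Icc 0 1) :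
    HasSum
      (fun n : ℕ =>
        4 / ((2 * (n : ℝ) + 1) * Real.pi) ^ 2 *
          Real.sin ((2 * (n : ℝ) + 1) * Real.pi * x) *
          Real.sin ((2 * (n : ℝ) + 1) * Real.pi * y))
      (min x y) ∧
    1 - |x - y| =
      1 - x - y + 2 * ∑' n : ℕ,
        4 / ((2 * (n : ℝ) + 1) * Real.pi) ^ 2 *
          Real.sin ((2 * (n : ℝ) + 1) * Real.pi * x) *
          Real.sin ((2 * (n : ℝ) + 1) * Real.pi * y) := by
  have abs_add : |x + y| = x + y := abs_of_nonneg hadd.1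
  have hsum := hasSum_sin_odd_mul_sin_odd hsub (abs_add.trans_le hadd.2)
  rw [abs_add] at hsum
  have min_eq : min x y = (x + y - |x - y|) / 2 := by
    rw [inf_eq_half_smul_add_sub_abs_sub' ℝ, abs_sub_comm, smul_eq_mul, inv_mul_eq_div]
  refine ⟨min_eq ▸ hsum, ?_⟩
  rw [hsum.tsum_eq]
  ring

theorem stmt_13 (x y : ℝ) (hx : x ∈ Set.Ioo (0 : ℝ) (1 / 2))
    (hy : y ∈ Set.Ioo (0 : ℝ) (1 / 2)) :
    HasSum
      (fun n : ℕ =>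
        4 / ((2 * (n : ℝ) + 1) * Real.pi) ^ 2 *
          Real.sin ((2 * (n : ℝ) + 1) * Real.pi * x) *
          Real.sin ((2 * (n : ℝ) + 1) * Real.pi * y))
      (min x y) ∧
    1 - |x - y| =
      1 - x - y + 2 * ∑' n : ℕ,
        4 / ((2 * (n : ℝ) + 1) * Real.pi) ^ 2 *
          Real.sin ((2 * (n : ℝ) + 1) * Real.pi * x) *
          Real.sin ((2 * (n : ℝ) + 1) * Real.pi * y) :=
  stmt_13_general (abs_le.2 ⟨by linarith [hx.1, hy.2], by linarith [hx.2, hy.1]⟩)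
    ⟨by linarith [hx.1, hy.1], by linarith [hx.2, hy.2]⟩
end
end

section
/- Let g : ℝ → ℂ be continuous on [0, 1], differentiable at every point of (0, 1), with derivative g' continuous and integrable on (0, 1). For every x ∈ (0, 1), (1/2) · ( ∫_0^1 k_x(y) · g'(y) dy + ∫_0^1 e^{−|x−y|} · g(y) dy ) = g(x) − (e^{−x} g(0) + e^{−(1−x)} g(1))/2, where k_x(y) = e^{y−x} for y < x and k_x(y) = −e^{x−y} for y ≥ x (the y-derivative of y ↦ e^{−|x−y|}). -/
open MeasureTheory Complex

noncomputable section

/-! Write `F = F_x` and `k = k_x`. Since `k = F` to the left of `x` and `k = -F` to the right of it,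
the energy density `k g' + F g` is `(F g)'` on the left and `-(F g)'` on the right. Both halves
contribute the boundary term `F(x) g(x) = g(x)` at `x`, which produces the factor `2`. -/

open Set intervalIntegral

/-- The kernel `F_x(y) = e^{-|x - y|}`, the candidate reproducing kernel of the energy form. -/
def expKernel (x y : ℝ) : ℝ :=
  Real.exp (-|x - y|)

/-- The derivative `k_x` of `expKernel x`. On the diagonal, where `expKernel x` has a corner, it
takes the value `-1` of the right derivative. -/
def expKernelDeriv (x y : ℝ) : ℝ :=
  if y < x then Real.exp (y - x) else -Real.exp (x - y)

section Kernel

variable {x y : ℝ}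

theorem expKernel_self (x : ℝ) : expKernel x x = 1 := by
  simp [expKernel]

theorem expKernel_of_le (h : y ≤ x) : expKernel x y = Real.exp (y - x) := by
  rw [expKernel, abs_of_nonneg (sub_nonneg.2 h), neg_sub]

theorem expKernel_of_ge (h : x ≤ y) : expKernel x y = Real.exp (x - y) := by
  rw [expKernel, abs_of_nonpos (sub_nonpos.2 h), neg_neg]

theorem expKernelDeriv_of_lt (h : y < x) : expKernelDeriv x y = expKernel x y := by
  rw [expKernelDeriv, if_pos h, expKernel_of_le h.le]

theorem expKernelDeriv_of_ge (h : x ≤ y) : expKernelDeriv x y = -expKernel x y := by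
  rw [expKernelDeriv, if_neg h.not_gt, expKernel_of_ge h]

theorem abs_expKernelDeriv (x y : ℝ) : |expKernelDeriv x y| = |expKernel x y| := by
  rcases lt_or_ge y x with h | h
  · rw [expKernelDeriv_of_lt h]
  · rw [expKernelDeriv_of_ge h, abs_neg]

theorem continuous_expKernel (x : ℝ) : Continuous (expKernel x) := by
  unfold expKernel
  fun_prop

theorem measurable_expKernelDeriv (x : ℝ) : Measurable (expKernelDeriv x) := by
  unfold expKernelDeriv
  exact Measurable.ite measurableSet_Iio (by fun_prop) (by fun_prop)

theorem hasDerivWithinAt_Ioi_expKernel (x y : ℝ) :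
    HasDerivWithinAt (expKernel x) (expKernelDeriv x y) (Ioi y) y := by
  rcases lt_or_ge y x with hyx | hxy
  · have h : HasDerivAt (fun z ↦ Real.exp (z - x)) (Real.exp (y - x)) y := by
      simpa using ((hasDerivAt_id y).sub_const x).exp
    rw [expKernelDeriv_of_lt hyx, expKernel_of_le hyx.le]
    refine (h.congr_of_eventuallyEq ?_).hasDerivWithinAt
    filter_upwards [Iio_mem_nhds hyx] with z hz using expKernel_of_le (le_of_lt hz)
  · have h : HasDerivAt (fun z ↦ Real.exp (x - z)) (-Real.exp (x - y)) y := by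
      simpa using ((hasDerivAt_id y).const_sub x).exp
    rw [expKernelDeriv_of_ge hxy, expKernel_of_ge hxy]
    exact h.hasDerivWithinAt.congr (fun z hz ↦ expKernel_of_ge (hxy.trans (le_of_lt hz)))
      (expKernel_of_ge hxy)

end Kernel

section Integrals

variable {E : Type*} [NormedAddCommGroup E] [NormedSpace ℝ E] {g g' : ℝ → E} {a b : ℝ}

theorem intervalIntegrable_expKernelDeriv_smul (x : ℝ) (hg : IntervalIntegrable g volume a b) :
    IntervalIntegrable (fun y ↦ expKernelDeriv x y • g y) volume a b := by
  have hF : IntervalIntegrable (fun y ↦ expKernel x y • g y) volume a b :=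
    hg.continuousOn_smul (continuous_expKernel x).continuousOn
  refine hF.mono_fun ?_ (.of_forall fun y ↦ ?_)
  · exact (measurable_expKernelDeriv x).aestronglyMeasurable.smul hg.def'.aestronglyMeasurable
  · simp only [norm_smul, Real.norm_eq_abs, abs_expKernelDeriv, le_refl]

theorem intervalIntegrable_expKernelDeriv (x a b : ℝ) :
    IntervalIntegrable (expKernelDeriv x) volume a b := by
  simpa using intervalIntegrable_expKernelDeriv_smul (g := fun _ ↦ (1 : ℝ)) x
    (intervalIntegrable_const (a := a) (b := b))

variable [CompleteSpace E] {x : ℝ}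

theorem integral_deriv_expKernel_smul (x : ℝ) (hab : a ≤ b) (hg : ContinuousOn g (Icc a b))
    (hgg' : ∀ y ∈ Ioo a b, HasDerivWithinAt g (g' y) (Ioi y) y)
    (hg' : IntervalIntegrable g' volume a b) :
    ∫ y in a..b, (expKernelDeriv x y • g y + expKernel x y • g' y) =
      expKernel x b • g b - expKernel x a • g a := by
  apply integral_deriv_smul_eq_sub_of_hasDeriv_right (continuous_expKernel x).continuousOn
  · rwa [uIcc_of_le hab]
  · exact fun y _ ↦ hasDerivWithinAt_Ioi_expKernel x y
  · rwa [min_eq_left hab, max_eq_right hab]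
  · exact intervalIntegrable_expKernelDeriv x a b
  · exact hg'

theorem integral_expKernel_energy_left (hax : a ≤ x) (hg : ContinuousOn g (Icc a x))
    (hgg' : ∀ y ∈ Ioo a x, HasDerivWithinAt g (g' y) (Ioi y) y)
    (hg' : IntervalIntegrable g' volume a x) :
    ∫ y in a..x, (expKernelDeriv x y • g' y + expKernel x y • g y) =
      g x - expKernel x a • g a :=
  calc
    _ = ∫ y in a..x, (expKernelDeriv x y • g y + expKernel x y • g' y) :=
      integral_congr_Ioo_of_le hax fun y hy ↦ by
        simp only [expKernelDeriv_of_lt hy.2, add_comm]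
    _ = g x - expKernel x a • g a := by
      rw [integral_deriv_expKernel_smul x hax hg hgg' hg', expKernel_self, one_smul]

theorem integral_expKernel_energy_right (hxb : x ≤ b) (hg : ContinuousOn g (Icc x b))
    (hgg' : ∀ y ∈ Ioo x b, HasDerivWithinAt g (g' y) (Ioi y) y)
    (hg' : IntervalIntegrable g' volume x b) :
    ∫ y in x..b, (expKernelDeriv x y • g' y + expKernel x y • g y) =
      g x - expKernel x b • g b :=
  calc
    _ = ∫ y in x..b, -(expKernelDeriv x y • g y + expKernel x y • g' y) :=
      integral_congr_Ioo_of_le hxb fun y hy ↦ by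
        simp only [expKernelDeriv_of_ge hy.1.le, neg_smul, neg_add, neg_neg, add_comm]
    _ = g x - expKernel x b • g b := by
      rw [intervalIntegral.integral_neg, integral_deriv_expKernel_smul x hxb hg hgg' hg',
        expKernel_self, one_smul, neg_sub]

theorem stmt_14_general (hx : x ∈ Icc a b) (hg : ContinuousOn g (Icc a b))
    (hgg' : ∀ y ∈ Ioo a b, HasDerivWithinAt g (g' y) (Ioi y) y)
    (hg' : IntegrableOn g' (Ioo a b)) :
    (1 / 2 : ℝ) •
        ((∫ y in Ioo a b, expKernelDeriv x y • g' y) + ∫ y in Ioo a b, expKernel x y • g y) =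
      g x - (1 / 2 : ℝ) • (expKernel x a • g a + expKernel x b • g b) := by
  have ⟨hax, hxb⟩ := hx
  have hab : a ≤ b := hax.trans hxb
  rw [← intervalIntegrable_iff_integrableOn_Ioo_of_le hab] at hg'
  have hkg' : IntervalIntegrable (fun y ↦ expKernelDeriv x y • g' y) volume a b :=
    intervalIntegrable_expKernelDeriv_smul x hg'
  have hFg : IntervalIntegrable (fun y ↦ expKernel x y • g y) volume a b :=
    ((continuous_expKernel x).continuousOn.smul hg).intervalIntegrable_of_Icc hab
  have hdensity := hkg'.add hFg
  have hleft : uIcc a x ⊆ uIcc a b := uIcc_subset_uIcc_left (Icc_subset_uIcc hx)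
  have hright : uIcc x b ⊆ uIcc a b := uIcc_subset_uIcc_right (Icc_subset_uIcc hx)
  simp only [← integral_Ioc_eq_integral_Ioo, ← integral_of_le hab]
  rw [← intervalIntegral.integral_add hkg' hFg,
    ← integral_add_adjacent_intervals (hdensity.mono_set hleft) (hdensity.mono_set hright),
    integral_expKernel_energy_left hax (hg.mono (Icc_subset_Icc_right hxb))
      (fun y hy ↦ hgg' y (Ioo_subset_Ioo_right hxb hy)) (hg'.mono_set hleft),
    integral_expKernel_energy_right hxb (hg.mono (Icc_subset_Icc_left hax))
      (fun y hy ↦ hgg' y (Ioo_subset_Ioo_left hax hy)) (hg'.mono_set hright)]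
  module

end Integrals

theorem stmt_14 (g : ℝ → ℂ)
    (hgcont : ContinuousOn g (Set.Icc (0 : ℝ) 1))
    (hgdiff : ∀ x ∈ Set.Ioo (0 : ℝ) 1, DifferentiableAt ℝ g x)
    (hg'cont : ContinuousOn (deriv g) (Set.Ioo (0 : ℝ) 1))
    (hg'int : IntegrableOn (deriv g) (Set.Ioo (0 : ℝ) 1)) :
    ∀ x ∈ Set.Ioo (0 : ℝ) 1,
      (1 / 2 : ℂ) *
        ((∫ y in Set.Ioo (0 : ℝ) 1,
            (if y < x then ((Real.exp (y - x) : ℝ) : ℂ) else -((Real.exp (x - y) : ℝ) : ℂ)) *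
              deriv g y) +
          ∫ y in Set.Ioo (0 : ℝ) 1, ((Real.exp (-|x - y|) : ℝ) : ℂ) * g y) =
      g x - (((Real.exp (-x) : ℝ) : ℂ) * g 0 + ((Real.exp (-(1 - x)) : ℝ) : ℂ) * g 1) / 2 := by
  intro x hx
  have h := stmt_14_general (Ioo_subset_Icc_self hx) hgcont
    (fun y hy ↦ (hgdiff y hy).hasDerivAt.hasDerivWithinAt) hg'int
  rw [expKernel_of_le hx.1.le, expKernel_of_ge hx.2.le] at h
  simpa [expKernel, expKernelDeriv, apply_ite, div_eq_inv_mul, mul_add] using h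
end
end

section
/- Let a > 0 and let F : ℝ → ℂ be continuous on (−a, a) and positive definite on (0, a). Then for all smooth compactly supported φ, ψ : ℝ → ℂ with supports contained in (0, a), ∫_0^a ∫_0^a ( conj(φ'(x)) · ψ(y) + conj(φ(x)) · ψ'(y) ) · F(x − y) dx dy = 0. (This is the skew-symmetry of the operator D^{(F)} : F_φ ↦ F_{φ'} on the reproducing kernel Hilbert space H_F.) -/
open MeasureTheory Complex

noncomputable section

/-- `F` is positive definite on `Ω ⊆ ℝ`. -/
def PosDefOn (Ω : Set ℝ) (F : ℝ → ℂ) : Prop :=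
  ∀ (N : ℕ) (x : Fin N → ℝ) (c : Fin N → ℂ), (∀ i, x i ∈ Ω) →
    (∑ i, ∑ j, (starRingEnd ℂ) (c i) * c j * F (x i - x j)).im = 0 ∧
    0 ≤ (∑ i, ∑ j, (starRingEnd ℂ) (c i) * c j * F (x i - x j)).re

/-!
The substitution `u = x - y` turns the double integral into
`∫ u, (∫ x, conj (φ' x) * ψ (x - u) + conj (φ x) * ψ' (x - u)) * F u`, whose inner integrand is the
derivative of the compactly supported function `x ↦ conj (φ x) * ψ (x - u)`, so that the inner
integral vanishes for every `u`. Since the supports of `φ` and `ψ` are compact, only the values of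
`F` on the compact set `tsupport φ - tsupport ψ` enter, and `F` is integrable there.
-/

open Function Set
open scoped Pointwise

theorem isCompact_sub {G : Type*} [TopologicalSpace G] [Sub G] [ContinuousSub G] {A B : Set G}
    (hA : IsCompact A) (hB : IsCompact B) : IsCompact (A - B) := by
  rw [← sub_image_prod]
  exact (hA.prod hB).image continuous_sub

theorem Ioo_sub_Ioo_subset {α : Type*} [AddCommGroup α] [PartialOrder α] [IsOrderedAddMonoid α]
    (a b c d : α) : Ioo a b - Ioo c d ⊆ Ioo (a - d) (b - c) := by
  rintro _ ⟨x, hx, y, hy, rfl⟩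
  exact ⟨sub_lt_sub hx.1 hy.2, sub_lt_sub hx.2 hy.1⟩

section IteratedIntegral

theorem setIntegral_setIntegral_eq_integral_integral_of_support_subset {X Y E : Type*}
    [MeasurableSpace X] [MeasurableSpace Y] [NormedAddCommGroup E] [NormedSpace ℝ E]
    {μ : Measure X} {ν : Measure Y} {s : Set X} {t : Set Y} {f : X → Y → E}
    (hf : support (uncurry f) ⊆ s ×ˢ t) :
    ∫ x in s, ∫ y in t, f x y ∂ν ∂μ = ∫ x, ∫ y, f x y ∂ν ∂μ := by
  have f_eq_zero {x y} (h : (x, y) ∉ s ×ˢ t) : f x y = 0 := notMem_support.1 fun hxy ↦ h (hf hxy)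
  have inner_eq (x : X) : ∫ y in t, f x y ∂ν = ∫ y, f x y ∂ν :=
    setIntegral_eq_integral_of_forall_compl_eq_zero fun y hy ↦ f_eq_zero fun h ↦ hy h.2
  simp only [inner_eq]
  refine setIntegral_eq_integral_of_forall_compl_eq_zero fun x hx ↦ ?_
  exact integral_eq_zero_of_ae (.of_forall fun y ↦ f_eq_zero fun h ↦ hx h.1)

variable {G R 𝕜 E : Type*} [AddCommGroup G] [TopologicalSpace G] [IsTopologicalAddGroup G]
  [T2Space G] [SecondCountableTopology G] [MeasurableSpace G] [BorelSpace G] {μ : Measure G}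
  [IsFiniteMeasureOnCompacts μ] [NormedAddCommGroup E] {A B : Set G} {F : G → E}

theorem integrable_comp_sub_smul_of_support_subset_prod [NormedRing R] [Module R E]
    [IsBoundedSMul R E] {K : G → G → R} (hK : Continuous (uncurry K)) (hA : IsCompact A)
    (hB : IsCompact B) (hKs : support (uncurry K) ⊆ A ×ˢ B) (hF : Integrable F μ) :
    Integrable (uncurry fun x u ↦ K x (x - u) • F u) (μ.prod μ) := by
  obtain ⟨C, hC⟩ :=
    (HasCompactSupport.of_support_subset_isCompact (hA.prod hB) hKs).exists_bound_of_continuous hK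
  have indicator_integrable : Integrable (A.indicator (1 : G → R)) μ :=
    (integrable_indicator_iff hA.measurableSet).2 (integrableOn_const hA.measure_lt_top.ne)
  have shear_continuous : Continuous fun p : G × G ↦ K p.1 (p.1 - p.2) :=
    hK.comp (continuous_fst.prodMk (continuous_fst.sub continuous_snd))
  refine ((indicator_integrable.smul_prod hF).bdd_smul C shear_continuous.aestronglyMeasurable
    (.of_forall fun p ↦ hC (p.1, p.1 - p.2))).congr (.of_forall fun ⟨x, u⟩ ↦ ?_)
  by_cases hx : x ∈ A
  · simp [hx]
  · have : K x (x - u) = 0 := notMem_support.1 fun h ↦ hx (@hKs (x, x - u) h).1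
    simp [this]

theorem integral_integral_smul_comp_sub [RCLike 𝕜] [NormedSpace 𝕜 E] [NormedSpace ℝ E]
    [CompleteSpace E] [SFinite μ] [μ.IsAddLeftInvariant] [μ.IsNegInvariant] {K : G → G → 𝕜}
    (hK : Continuous (uncurry K)) (hA : IsCompact A) (hB : IsCompact B)
    (hKs : support (uncurry K) ⊆ A ×ˢ B) (hF : IntegrableOn F (A - B) μ) :
    ∫ x, ∫ y, K x y • F (x - y) ∂μ ∂μ = ∫ u, (∫ x, K x (x - u) ∂μ) • F u ∂μ := by
  have K_eq_zero {x y} (h : (x, y) ∉ A ×ˢ B) : K x y = 0 := notMem_support.1 fun hxy ↦ h (hKs hxy)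
  have smul_indicator (x u : G) : K x (x - u) • (A - B).indicator F u = K x (x - u) • F u := by
    by_cases h : (x, x - u) ∈ A ×ˢ B
    · rw [indicator_of_mem (by simpa using sub_mem_sub h.1 h.2)]
    · simp [K_eq_zero h]
  have integrable_shear : Integrable (uncurry fun x u ↦ K x (x - u) • F u) (μ.prod μ) := by
    simpa only [smul_indicator] using integrable_comp_sub_smul_of_support_subset_prod hK hA hB hKs
      (hF.integrable_indicator (isCompact_sub hA hB).measurableSet)
  calc ∫ x, ∫ y, K x y • F (x - y) ∂μ ∂μ
      = ∫ x, ∫ u, K x (x - u) • F u ∂μ ∂μ := by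
        congr with x
        simpa using (integral_sub_left_eq_self (fun y ↦ K x y • F (x - y)) μ x).symm
    _ = ∫ u, ∫ x, K x (x - u) • F u ∂μ ∂μ := integral_integral_swap integrable_shear
    _ = ∫ u, (∫ x, K x (x - u) ∂μ) • F u ∂μ := by simp only [integral_smul_const]

end IteratedIntegral

section IntegrationByParts

theorem integral_deriv_eq_zero_of_hasCompactSupport {E : Type*} [NormedAddCommGroup E]
    [NormedSpace ℝ E] {f : ℝ → E} (hf : ContDiff ℝ 1 f) (hfc : HasCompactSupport f) :
    ∫ x, deriv f x = 0 :=
  integral_eq_zero_of_hasDerivAt_of_integrable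
    (fun x ↦ (hf.differentiable one_ne_zero x).hasDerivAt)
    ((hf.continuous_deriv le_rfl).integrable_of_hasCompactSupport hfc.deriv)
    (hf.continuous.integrable_of_hasCompactSupport hfc)

variable {𝔸 : Type*} [NormedRing 𝔸] [NormedAlgebra ℝ 𝔸] {f g : ℝ → 𝔸}

theorem integral_deriv_mul_add_mul_deriv_comp_sub_const_eq_zero (hf : ContDiff ℝ 1 f)
    (hfc : HasCompactSupport f) (hg : ContDiff ℝ 1 g) (u : ℝ) :
    ∫ x, (deriv f x * g (x - u) + f x * deriv g (x - u)) = 0 := by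
  have hg_sub : ContDiff ℝ 1 fun x ↦ g (x - u) := by fun_prop
  have product_rule (x : ℝ) : deriv (fun x ↦ f x * g (x - u)) x =
      deriv f x * g (x - u) + f x * deriv g (x - u) := by
    rw [deriv_fun_mul (hf.differentiable one_ne_zero x) (hg_sub.differentiable one_ne_zero x),
      deriv_comp_sub_const]
  simpa only [product_rule] using
    integral_deriv_eq_zero_of_hasCompactSupport (hf.mul hg_sub) hfc.mul_right

theorem support_deriv_mul_add_mul_deriv_subset :
    support (uncurry fun x y ↦ deriv f x * g y + f x * deriv g y) ⊆ tsupport f ×ˢ tsupport g := by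
  refine (support_add _ _).trans (union_subset ?_ ?_) <;> rintro ⟨x, y⟩ hxy
  · exact ⟨support_deriv_subset (left_ne_zero_of_mul hxy),
      subset_tsupport _ (right_ne_zero_of_mul hxy)⟩
  · exact ⟨subset_tsupport _ (left_ne_zero_of_mul hxy),
      support_deriv_subset (right_ne_zero_of_mul hxy)⟩

end IntegrationByParts

section SkewSymmetry

variable {𝕜 : Type*} [RCLike 𝕜] {s t : Set ℝ}

theorem setIntegral_setIntegral_deriv_mul_add_mul_deriv_smul_comp_sub_eq_zero {E : Type*}
    [NormedAddCommGroup E] [NormedSpace 𝕜 E] [NormedSpace ℝ E] [CompleteSpace E] {F : ℝ → E}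
    (hF : LocallyIntegrableOn F (s - t)) {f g : ℝ → 𝕜}
    (hf : ContDiff ℝ 1 f) (hfc : HasCompactSupport f) (hfs : tsupport f ⊆ s)
    (hg : ContDiff ℝ 1 g) (hgc : HasCompactSupport g) (hgt : tsupport g ⊆ t) :
    ∫ x in s, ∫ y in t, (deriv f x * g y + f x * deriv g y) • F (x - y) = 0 := by
  have support_integrand :
      support (uncurry fun x y ↦ (deriv f x * g y + f x * deriv g y) • F (x - y)) ⊆ s ×ˢ t :=
    (support_smul_subset_left _ _).trans <|
      support_deriv_mul_add_mul_deriv_subset.trans (prod_mono hfs hgt)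
  have kernel_continuous : Continuous (uncurry fun x y ↦ deriv f x * g y + f x * deriv g y) := by
    have := hf.continuous
    have := hg.continuous
    have := hf.continuous_deriv le_rfl
    have := hg.continuous_deriv le_rfl
    fun_prop
  rw [setIntegral_setIntegral_eq_integral_integral_of_support_subset support_integrand,
    integral_integral_smul_comp_sub kernel_continuous hfc hgc
      support_deriv_mul_add_mul_deriv_subset
      (hF.integrableOn_compact_subset (sub_subset_sub hfs hgt) (isCompact_sub hfc hgc))]
  simp only [integral_deriv_mul_add_mul_deriv_comp_sub_const_eq_zero hf hfc hg, zero_smul,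
    integral_zero]

theorem stmt_17_general {F : ℝ → 𝕜} (hF : LocallyIntegrableOn F (s - t)) {φ ψ : ℝ → 𝕜}
    (hφ : ContDiff ℝ 1 φ) (hφc : HasCompactSupport φ) (hφs : tsupport φ ⊆ s)
    (hψ : ContDiff ℝ 1 ψ) (hψc : HasCompactSupport ψ) (hψt : tsupport ψ ⊆ t) :
    ∫ x in s, ∫ y in t,
      ((starRingEnd 𝕜) (deriv φ x) * ψ y + (starRingEnd 𝕜) (φ x) * deriv ψ y) * F (x - y) = 0 := by
  have deriv_conj (x : ℝ) :
      deriv (fun x ↦ (starRingEnd 𝕜) (φ x)) x = (starRingEnd 𝕜) (deriv φ x) := deriv.star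
  simpa only [deriv_conj, smul_eq_mul] using
    setIntegral_setIntegral_deriv_mul_add_mul_deriv_smul_comp_sub_eq_zero hF
      (f := fun x ↦ (starRingEnd 𝕜) (φ x)) ((RCLike.conjCLE (K := 𝕜)).contDiff.comp hφ)
      (hφc.comp_left (map_zero _)) ((tsupport_comp_subset (map_zero (starRingEnd 𝕜)) φ).trans hφs)
      hψ hψc hψt

end SkewSymmetry

theorem stmt_17 (a : ℝ) (ha : 0 < a) (F : ℝ → ℂ)
    (hFc : ContinuousOn F (Set.Ioo (-a) a))
    (hpd : PosDefOn (Set.Ioo 0 a) F) :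
    ∀ φ ψ : ℝ → ℂ,
      ContDiff ℝ (⊤ : ℕ∞) φ → HasCompactSupport φ → tsupport φ ⊆ Set.Ioo 0 a →
      ContDiff ℝ (⊤ : ℕ∞) ψ → HasCompactSupport ψ → tsupport ψ ⊆ Set.Ioo 0 a →
      (∫ x in Set.Ioo (0 : ℝ) a, ∫ y in Set.Ioo (0 : ℝ) a,
        ((starRingEnd ℂ) (deriv φ x) * ψ y + (starRingEnd ℂ) (φ x) * deriv ψ y) *
          F (x - y)) = 0 := by
  intro φ ψ hφ hφc hφs hψ hψc hψs
  have difference_subset : Ioo 0 a - Ioo 0 a ⊆ Ioo (-a) a := by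
    simpa using Ioo_sub_Ioo_subset 0 a 0 a
  exact stmt_17_general ((hFc.locallyIntegrableOn measurableSet_Ioo).mono_set difference_subset)
    (hφ.of_le (by simp)) hφc hφs (hψ.of_le (by simp)) hψc hψs
end
end

section
/- Let F : ℝ → ℂ be continuous and positive definite on ℝ, and suppose the imaginary part of F is not identically zero. For m ∈ ℝ define F_m(x) = Re(F(x)) + i·m·Im(F(x)). Then: (i) for every m ∈ ℝ with −1 ≤ m ≤ 1, F_m is positive definite on ℝ; and (ii) there exists M > 0 such that for every real m with |m| > M, F_m is not positive definite on ℝ. -/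
open Complex

noncomputable section

/-!
A function `F` is positive definite exactly when the kernel `K x y = F (x - y)` is a positive
semidefinite matrix with rows and columns indexed by `ℝ`, so the argument is about such kernels.
Multiplying the imaginary part of `K` by `m` gives `(1 + m) / 2 • K + (1 - m) / 2 • Kᵀ`,
a convex combination of positive semidefinite kernels when `|m| ≤ 1`. On the other hand this
operation leaves the diagonal of `K` unchanged, and the diagonal bounds the off-diagonal entries of
a positive semidefinite kernel, so `m` is bounded as soon as `K` has a non-real entry.
-/

open Matrix
open scoped ComplexOrder

theorem posSemidef_iff_forall_fin_submatrix {X R : Type*} [Ring R] [PartialOrder R] [StarRing R]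
    {K : Matrix X X R} :
    K.PosSemidef ↔ ∀ (N : ℕ) (x : Fin N → X), (K.submatrix x x).PosSemidef := by
  refine ⟨fun hK N x ↦ hK.submatrix x, fun h ↦ ⟨?_, fun c ↦ ?_⟩⟩
  · ext x y
    simpa using (h 2 ![x, y]).isHermitian.apply 0 1
  · let e := c.support.equivFin.symm
    have h_nonneg := (h _ (fun i ↦ (e i : X))).dotProduct_mulVec_nonneg (fun i ↦ c (e i))
    simp only [dotProduct, mulVec, Finset.mul_sum, Pi.star_apply, submatrix_apply,
      ← mul_assoc] at h_nonneg
    simp only [Finsupp.sum, ← Finset.sum_coe_sort c.support]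
    simpa only [← e.sum_comp] using h_nonneg

theorem posSemidef_iff_dotProduct_mulVec_nonneg {n : Type*} [Fintype n] {A : Matrix n n ℂ} :
    A.PosSemidef ↔ ∀ c : n → ℂ, 0 ≤ star c ⬝ᵥ (A *ᵥ c) := by
  classical
  refine ⟨fun hA ↦ hA.dotProduct_mulVec_nonneg, fun h ↦ ?_⟩
  -- Polarization over `ℂ`: a quadratic form with real values comes from a Hermitian matrix.
  rw [← isPositive_toEuclideanLin_iff, LinearMap.isPositive_iff_complex]
  intro v
  have h_inner : 0 ≤ inner ℂ (toEuclideanLin A v) v := by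
    rw [← inner_conj_symm, starRingEnd_apply, star_nonneg_iff,
      EuclideanSpace.inner_eq_star_dotProduct, dotProduct_comm]
    exact h v
  obtain ⟨h_re, h_im⟩ := Complex.nonneg_iff.mp h_inner
  exact ⟨Complex.ext rfl h_im, h_re⟩

theorem posDefOnReal_iff_posSemidef {F : ℝ → ℂ} :
    PosDefOnReal F ↔ (Matrix.of fun x y ↦ F (x - y)).PosSemidef := by
  have h_form (N : ℕ) (x : Fin N → ℝ) (c : Fin N → ℂ) :
      star c ⬝ᵥ ((Matrix.of fun x y ↦ F (x - y)).submatrix x x *ᵥ c) =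
        ∑ i, ∑ j, (starRingEnd ℂ) (c i) * c j * F (x i - x j) := by
    simp [dotProduct, mulVec, Finset.mul_sum, mul_assoc, mul_comm (c _)]
  rw [posSemidef_iff_forall_fin_submatrix]
  simp only [posSemidef_iff_dotProduct_mulVec_nonneg, h_form, Complex.nonneg_iff, PosDefOnReal,
    eq_comm (a := (0 : ℝ)), and_comm]

theorem norm_apply_sq_le_re_diag_mul_re_diag {X 𝕜 : Type*} [RCLike 𝕜] {K : Matrix X X 𝕜}
    (hK : K.PosSemidef) (x y : X) :
    ‖K x y‖ ^ 2 ≤ RCLike.re (K x x) * RCLike.re (K y y) := by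
  have h_det : 0 ≤ K x x * K y y - K x y * K y x := by
    simpa only [det_fin_two, submatrix_apply, cons_val_zero, cons_val_one] using
      (hK.submatrix ![x, y]).det_nonneg
  have h_offDiag : RCLike.re (K x y * K y x) = ‖K x y‖ ^ 2 := by
    rw [← hK.isHermitian.apply y x, ← starRingEnd_apply, RCLike.mul_conj]
    norm_cast
  have h_im : RCLike.im (K x x) = 0 := (RCLike.nonneg_iff.mp hK.diag_nonneg).2
  have h_re := (RCLike.nonneg_iff.mp h_det).1
  rw [map_sub, RCLike.mul_re, h_im, h_offDiag] at h_re
  linarith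

/-- The real-linear map `a + b * I ↦ a + m * b * I` of `ℂ`, so that `F_m` is `scaleIm m ∘ F`. -/
def scaleIm (m : ℝ) (z : ℂ) : ℂ := (z.re : ℂ) + I * (m : ℂ) * (z.im : ℂ)

@[simp]
theorem scaleIm_re (m : ℝ) (z : ℂ) : (scaleIm m z).re = z.re := by
  simp [scaleIm]

@[simp]
theorem scaleIm_im (m : ℝ) (z : ℂ) : (scaleIm m z).im = m * z.im := by
  simp [scaleIm]

section Kernel

variable {X : Type*} {K : Matrix X X ℂ}

theorem map_scaleIm_eq_smul_add_smul_transpose (hK : K.IsHermitian) (m : ℝ) :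
    K.map (scaleIm m) = ((1 + m) / 2) • K + ((1 - m) / 2) • Kᵀ := by
  ext x y
  have h_symm : K y x = star (K x y) := (hK.apply y x).symm
  apply Complex.ext <;> simp [h_symm] <;> ring

theorem posSemidef_map_scaleIm (hK : K.PosSemidef) {m : ℝ} (hm : |m| ≤ 1) :
    (K.map (scaleIm m)).PosSemidef := by
  obtain ⟨h_lower, h_upper⟩ := abs_le.mp hm
  rw [map_scaleIm_eq_smul_add_smul_transpose hK.isHermitian]
  exact (hK.smul (by linarith)).add (hK.transpose.smul (by linarith))

theorem abs_le_of_posSemidef_map_scaleIm {m : ℝ} (hK : (K.map (scaleIm m)).PosSemidef)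
    {x y : X} (hxy : (K x y).im ≠ 0) :
    |m| ≤ √((K x x).re * (K y y).re) / |(K x y).im| := by
  rw [le_div_iff₀ (abs_pos.mpr hxy)]
  calc |m| * |(K x y).im| = |(scaleIm m (K x y)).im| := by rw [scaleIm_im, abs_mul]
    _ ≤ ‖scaleIm m (K x y)‖ := abs_im_le_norm _
    _ ≤ √((K x x).re * (K y y).re) :=
      Real.le_sqrt_of_sq_le (by simpa using norm_apply_sq_le_re_diag_mul_re_diag hK x y)

theorem stmt_19_general (hK : K.PosSemidef) (him : ∃ x y, (K x y).im ≠ 0) :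
    (∀ m : ℝ, -1 ≤ m → m ≤ 1 → (K.map (scaleIm m)).PosSemidef) ∧
    ∃ M : ℝ, 0 < M ∧ ∀ m : ℝ, M < |m| → ¬ (K.map (scaleIm m)).PosSemidef := by
  obtain ⟨x, y, hxy⟩ := him
  refine ⟨fun m h_lower h_upper ↦ posSemidef_map_scaleIm hK (abs_le.mpr ⟨h_lower, h_upper⟩),
    √((K x x).re * (K y y).re) / |(K x y).im| + 1, by positivity, fun m hm hKm ↦ ?_⟩
  linarith [abs_le_of_posSemidef_map_scaleIm hKm hxy]

end Kernel

theorem stmt_19 (F : ℝ → ℂ) (hcont : Continuous F) (hpd : PosDefOnReal F)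
    (him : ∃ x : ℝ, (F x).im ≠ 0) :
    (∀ m : ℝ, -1 ≤ m → m ≤ 1 →
      PosDefOnReal (fun x => ((F x).re : ℂ) + Complex.I * (m : ℂ) * ((F x).im : ℂ))) ∧
    (∃ M : ℝ, 0 < M ∧ ∀ m : ℝ, M < |m| →
      ¬ PosDefOnReal (fun x => ((F x).re : ℂ) + Complex.I * (m : ℂ) * ((F x).im : ℂ))) := by
  simp only [posDefOnReal_iff_posSemidef] at hpd ⊢
  exact stmt_19_general hpd (him.imp fun x hx ↦ ⟨0, by simpa using hx⟩)
end
end
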